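/- arXiv:1208.2294 — 2 statements merged into one kernel-verified Lean document; each statement's English description precedes it below -/
import Mathlib

section
/- Let f ∈ DNF^{k,r} and 0 < ε ≤ 1, and set τ = ⌈28k·log₂(2r/ε)⌉. Then there exists an M-sparse function g: {−1,1}^n → ℝ with M ≤ 32r²(28k)^{2τ}/ε such that g ε-approximates f, i.e., E_{x uniform}[(f(x) − g(x))²] ≤ ε. -/
/-- Fourier coefficient `f̂(S) = E_x[f(x)·χ_S(x)]` of `f : {−1,1}^n → ℝ`,
where `{0,1}` is identified with `{−1,1}` via `b ↦ 2b−1`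
(so `true ↦ 1` and `false ↦ −1`), and `χ_S(x) = ∏_{i∈S} x_i`. -/
noncomputable def pbFourier {n : ℕ} (f : (Fin n → Bool) → ℝ)
    (S : Finset (Fin n)) : ℝ :=
  (∑ x : Fin n → Bool, f x * ∏ i ∈ S, (if x i then (1 : ℝ) else -1)) / 2 ^ n

/-- `f ∈ DNF^{k,r}`: `f = (2/r)·F − 1` for a pseudo-Boolean k-DNF `F` with
constants in `{0,…,r}`. -/
def IsPBDNF {n : ℕ} (k r : ℕ) (f : (Fin n → Bool) → ℝ) : Prop :=
  ∃ (m : ℕ) (a : Fin m → ℕ) (A B : Fin m → Finset (Fin n)),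
    (∀ t, a t ≤ r) ∧ (∀ t, (A t).card + (B t).card ≤ k) ∧
    ∀ x, f x = 2 / r *
      ((Finset.univ.sup fun t =>
        if (∀ i ∈ A t, x i = true) ∧ (∀ j ∈ B t, x j = false) then a t else 0 : ℕ) : ℝ)
      - 1

/-!
A pseudo-Boolean `k`-DNF is a decision list with tests of width `k`. Let `Φ` be a complexity measure
that is subadditive under querying a variable. For a random restriction leaving each variable free
with probability `p = 1 / (28k)`, the expected measure of a restricted decision list is at most
`5 / 4`: a falsified test is dropped from the list, and a test that is not falsified is satisfied
with probability close to one, so that querying its free variables is cheap on average.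

Applied to `∑ |f̂(S)|` and `∑ 2 ^ |S| * f̂(S) ^ 2` this yields `∑ p ^ |S| * |f̂(S)| ≤ 5 / 4` and
`∑ (1 + p) ^ |S| * f̂(S) ^ 2 ≤ 5 / 4`. The first bounds the spectral norm of the part of `f` of
degree at most `τ`, the second the weight of `f` above `τ`, so it suffices to keep the large
coefficients of degree at most `τ`.
-/

open Finset Function

section Restrictions

variable {ι : Type*}

/-- Restrictions (partial assignments) of Boolean variables indexed by `ι`; `none` marks a variable
that is left free (a star). -/
abbrev Restriction (ι : Type*) := ι → Option Bool

/-- The restricted function `f|ρ`, still regarded as a function of all the variables. -/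
def restrictCube (ρ : Restriction ι) (f : (ι → Bool) → ℝ) : (ι → Bool) → ℝ :=
  fun x => f fun i => (ρ i).getD (x i)

/-- One rule of a decision list: output `c` if the term `⋀ i ∈ V, x i = s i` holds, and evaluate the
remaining list `f` otherwise. -/
def decisionRule (V : Finset ι) (s : ι → Bool) (c : ℝ) (f : (ι → Bool) → ℝ) : (ι → Bool) → ℝ :=
  fun x => if ∀ i ∈ V, x i = s i then c else f x

/-- Functions computed by a decision list whose tests are terms of width at most `k` and whose
outputs lie in `[-1, 1]`. -/
inductive IsDecisionList (k : ℕ) : ((ι → Bool) → ℝ) → Prop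
  | const (c : ℝ) (hc : |c| ≤ 1) : IsDecisionList k fun _ => c
  | cons (V : Finset ι) (s : ι → Bool) (c : ℝ) (f : (ι → Bool) → ℝ) (hV : #V ≤ k) (hc : |c| ≤ 1)
      (hf : IsDecisionList k f) : IsDecisionList k (decisionRule V s c f)

theorem decisionRule_empty (s : ι → Bool) (c : ℝ) (f : (ι → Bool) → ℝ) :
    decisionRule ∅ s c f = fun _ => c := by
  funext x
  simp [decisionRule]

theorem IsDecisionList.exists_eq_const {f : (ι → Bool) → ℝ} (hf : IsDecisionList 0 f) :
    ∃ c : ℝ, f = fun _ => c := by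
  cases hf with
  | const c => exact ⟨c, rfl⟩
  | cons V s c f hV =>
    obtain rfl : V = ∅ := by simpa using hV
    exact ⟨c, decisionRule_empty s c f⟩

theorem restrictCube_decisionRule_of_falsified {ρ : Restriction ι} {V : Finset ι} {s : ι → Bool}
    (c : ℝ) (f : (ι → Bool) → ℝ) {i : ι} (hi : i ∈ V) (hρ : ρ i = some (!s i)) :
    restrictCube ρ (decisionRule V s c f) = restrictCube ρ f := by
  funext x
  refine if_neg fun h => ?_
  simpa [hρ] using h i hi

variable [DecidableEq ι]

theorem restrictCube_decisionRule_insert {ρ : Restriction ι} {s : ι → Bool} {i : ι}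
    (hρ : ρ i = some (s i)) (V : Finset ι) (c : ℝ) (f : (ι → Bool) → ℝ) :
    restrictCube ρ (decisionRule (insert i V) s c f) = restrictCube ρ (decisionRule V s c f) := by
  funext x
  simp [restrictCube, decisionRule, hρ]

theorem restrictCube_update {ρ : Restriction ι} {i : ι} (hi : ρ i = none) (f : (ι → Bool) → ℝ)
    (b : Bool) :
    restrictCube (update ρ i (some b)) f = fun x => restrictCube ρ f (update x i b) := by
  funext x
  refine congrArg f (funext fun j => ?_)
  rcases eq_or_ne j i with rfl | hj
  · simp [hi]
  · simp [hj]

/-- Nonnegative weights on restrictions for which freeing a variable costs a factor `q`.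
The `p`-random restriction conditioned on any event that is preserved by fixing further variables
gives such a weight, so an induction over all these weights carries the conditioning along. -/
structure IsStarBounded (q : ℝ) (w : Restriction ι → ℝ) : Prop where
  nonneg : ∀ ρ, 0 ≤ w ρ
  le_mul_update : ∀ ρ i b, ρ i = none → w ρ ≤ q * w (update ρ i (some b))

/-- The weight `w` on restrictions leaving `i` free, transported to those setting `i` to `b`. -/
def starPart (w : Restriction ι → ℝ) (i : ι) (b : Bool) : Restriction ι → ℝ :=
  fun ρ => if ρ i = some b then w (update ρ i none) else 0

theorem IsStarBounded.ite {q : ℝ} (hq : 0 ≤ q) {w : Restriction ι → ℝ} (hw : IsStarBounded q w)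
    {P : Restriction ι → Prop} [DecidablePred P]
    (hP : ∀ ρ i b, ρ i = none → P ρ → P (update ρ i (some b))) :
    IsStarBounded q fun ρ => if P ρ then w ρ else 0 where
  nonneg ρ := by
    split_ifs
    exacts [hw.nonneg ρ, le_rfl]
  le_mul_update ρ i b hi := by
    by_cases h : P ρ
    · simpa only [if_pos h, if_pos (hP ρ i b hi h)] using hw.le_mul_update ρ i b hi
    · rw [if_neg h]
      refine mul_nonneg hq ?_
      split_ifs
      exacts [hw.nonneg _, le_rfl]

theorem IsStarBounded.starPart {q : ℝ} (hq : 0 ≤ q) {w : Restriction ι → ℝ}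
    (hw : IsStarBounded q w) (i : ι) (b : Bool) : IsStarBounded q (starPart w i b) where
  nonneg ρ := by
    unfold _root_.starPart
    split_ifs
    exacts [hw.nonneg _, le_rfl]
  le_mul_update ρ j c hj := by
    unfold _root_.starPart
    by_cases h : ρ i = some b
    · have hji : j ≠ i := by
        rintro rfl
        simp [h] at hj
      rw [if_pos h, if_pos (by rw [update_of_ne hji.symm, h]), update_comm hji]
      exact hw.le_mul_update _ j c (by rw [update_of_ne hji, hj])
    · rw [if_neg h]
      refine mul_nonneg hq ?_
      split_ifs
      exacts [hw.nonneg _, le_rfl]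

theorem sum_filter_eq_none {E : Finset (Restriction ι)} {i : ι}
    (hE : ∀ ρ o, update ρ i o ∈ E ↔ ρ ∈ E) (b : Bool) (G : Restriction ι → Restriction ι → ℝ) :
    ∑ ρ ∈ E with ρ i = none, G ρ (update ρ i (some b)) =
      ∑ ρ ∈ E with ρ i = some b, G (update ρ i none) ρ := by
  refine sum_nbij' (update · i (some b)) (update · i none) ?_ ?_ ?_ ?_ ?_
  · intro ρ hρ
    simpa [hE] using (mem_filter.1 hρ).1
  · intro ρ hρ
    simpa [hE] using (mem_filter.1 hρ).1
  all_goals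
    intro ρ hρ
    simp [← (mem_filter.1 hρ).2]

theorem sum_filter_eq_none_mul_update {E : Finset (Restriction ι)} {i : ι}
    (hE : ∀ ρ o, update ρ i o ∈ E ↔ ρ ∈ E) (b : Bool) (w Ψ : Restriction ι → ℝ) :
    ∑ ρ ∈ E with ρ i = none, w ρ * Ψ (update ρ i (some b)) =
      ∑ ρ ∈ E, starPart w i b ρ * Ψ ρ := by
  rw [sum_filter_eq_none hE b fun ρ σ => w ρ * Ψ σ, sum_filter]
  exact sum_congr rfl fun ρ _ => by simp [starPart, ite_mul]

/-- A complexity measure of real functions on the cube that grows at most additively when a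
variable is queried and is at most `1` on constants from `[-1, 1]`. -/
structure IsQuerySubadditive (Φ : ((ι → Bool) → ℝ) → ℝ) : Prop where
  le_add : ∀ f i, Φ f ≤ Φ (fun x => f (update x i true)) + Φ (fun x => f (update x i false))
  const_le_one : ∀ c : ℝ, |c| ≤ 1 → Φ (fun _ => c) ≤ 1

theorem IsQuerySubadditive.restrictCube_le_add {Φ : ((ι → Bool) → ℝ) → ℝ}
    (hΦ : IsQuerySubadditive Φ) (f : (ι → Bool) → ℝ) (ρ : Restriction ι)
    (i : ι) (hi : ρ i = none) :
    Φ (restrictCube ρ f) ≤ Φ (restrictCube (update ρ i (some true)) f) +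
      Φ (restrictCube (update ρ i (some false)) f) := by
  rw [restrictCube_update hi, restrictCube_update hi]
  exact hΦ.le_add _ i

variable [Fintype ι]

/-- The restrictions under which the term `⋀ i ∈ V, x i = s i` becomes identically true. -/
def satisfiers (V : Finset ι) (s : ι → Bool) : Finset (Restriction ι) :=
  {ρ | ∀ i ∈ V, ρ i = some (s i)}

/-- The restrictions under which the term `⋀ i ∈ V, x i = s i` does not become identically
false. -/
def nonFalsifiers (V : Finset ι) (s : ι → Bool) : Finset (Restriction ι) :=
  {ρ | ∀ i ∈ V, ρ i ≠ some (!s i)}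

theorem mem_satisfiers {V : Finset ι} {s : ι → Bool} {ρ : Restriction ι} :
    ρ ∈ satisfiers V s ↔ ∀ i ∈ V, ρ i = some (s i) := by
  simp [satisfiers]

theorem mem_nonFalsifiers {V : Finset ι} {s : ι → Bool} {ρ : Restriction ι} :
    ρ ∈ nonFalsifiers V s ↔ ∀ i ∈ V, ρ i ≠ some (!s i) := by
  simp [nonFalsifiers]

theorem satisfiers_subset_nonFalsifiers (V : Finset ι) (s : ι → Bool) :
    satisfiers V s ⊆ nonFalsifiers V s := fun ρ hρ =>
  mem_nonFalsifiers.2 fun i hi => by simp [mem_satisfiers.1 hρ i hi]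

theorem update_mem_satisfiers {V : Finset ι} {i : ι} (hi : i ∉ V) (s : ι → Bool)
    (ρ : Restriction ι) (o : Option Bool) :
    update ρ i o ∈ satisfiers V s ↔ ρ ∈ satisfiers V s := by
  simp only [mem_satisfiers]
  exact forall₂_congr fun j hj => by rw [update_of_ne (ne_of_mem_of_not_mem hj hi)]

theorem update_mem_nonFalsifiers {V : Finset ι} {i : ι} (hi : i ∉ V) (s : ι → Bool)
    (ρ : Restriction ι) (o : Option Bool) :
    update ρ i o ∈ nonFalsifiers V s ↔ ρ ∈ nonFalsifiers V s := by
  simp only [mem_nonFalsifiers]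
  exact forall₂_congr fun j hj => by rw [update_of_ne (ne_of_mem_of_not_mem hj hi)]

theorem filter_satisfiers (V : Finset ι) (s : ι → Bool) (i : ι) :
    {ρ ∈ satisfiers V s | ρ i = some (s i)} = satisfiers (insert i V) s := by
  ext ρ
  simp [mem_satisfiers, and_comm]

theorem sum_nonFalsifiers_insert (V : Finset ι) (s : ι → Bool) (i : ι) (G : Restriction ι → ℝ) :
    ∑ ρ ∈ nonFalsifiers (insert i V) s, G ρ =
      ∑ ρ ∈ nonFalsifiers V s with ρ i = some (s i), G ρ +
        ∑ ρ ∈ nonFalsifiers V s with ρ i = none, G ρ := by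
  rw [← sum_union (disjoint_filter.2 fun ρ _ h => by simp [h]), ← filter_or]
  congr 1
  ext ρ
  simp only [mem_filter, mem_nonFalsifiers, forall_mem_insert]
  rw [and_comm]
  refine and_congr_right fun _ => ?_
  rcases ρ i with _ | b
  · simp
  · cases b <;> cases s i <;> simp

theorem sum_satisfiers_starPart_le {q : ℝ} {w : Restriction ι → ℝ} (hw : IsStarBounded q w)
    {V : Finset ι} {i : ι} (hi : i ∉ V) (s : ι → Bool) (b : Bool) :
    ∑ ρ ∈ satisfiers V s, starPart w i b ρ ≤ q * ∑ ρ ∈ satisfiers (insert i V) s, w ρ := by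
  have hE := update_mem_satisfiers hi s
  calc ∑ ρ ∈ satisfiers V s, starPart w i b ρ
      = ∑ ρ ∈ satisfiers V s with ρ i = none, w ρ := by
        simpa using (sum_filter_eq_none_mul_update hE b w fun _ => 1).symm
    _ ≤ ∑ ρ ∈ satisfiers V s with ρ i = none, q * w (update ρ i (some (s i))) :=
        sum_le_sum fun ρ hρ => hw.le_mul_update ρ i (s i) (mem_filter.1 hρ).2
    _ = q * ∑ ρ ∈ satisfiers (insert i V) s, w ρ := by
        rw [sum_filter_eq_none hE (s i) fun _ σ => q * w σ, filter_satisfiers, mul_sum]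

/-- Querying the variable `i` of the term: `K b` bounds the contribution of the answer `b`, and
a free `i` is charged `q` for each of the two answers. -/
theorem sum_nonFalsifiers_insert_le {q : ℝ} (hq : 0 ≤ q) {w Ψ : Restriction ι → ℝ}
    (hw : IsStarBounded q w) {V : Finset ι} {s : ι → Bool} {i : ι} (hi : i ∉ V)
    (hΨ : ∀ ρ, ρ i = none → Ψ ρ ≤ Ψ (update ρ i (some true)) + Ψ (update ρ i (some false)))
    {K : Bool → ℝ} (hK : ∀ b, 0 ≤ K b)
    (hbound : ∀ b v, IsStarBounded q v → (∀ ρ, v ρ ≠ 0 → ρ i = some b) →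
      ∑ ρ ∈ nonFalsifiers V s, v ρ * Ψ ρ ≤ K b * ∑ ρ ∈ satisfiers V s, v ρ) :
    ∑ ρ ∈ nonFalsifiers (insert i V) s, w ρ * Ψ ρ ≤
      (K (s i) + q * (K true + K false)) * ∑ ρ ∈ satisfiers (insert i V) s, w ρ := by
  set Z := ∑ ρ ∈ satisfiers (insert i V) s, w ρ
  have hfixed : ∑ ρ ∈ nonFalsifiers V s with ρ i = some (s i), w ρ * Ψ ρ ≤ K (s i) * Z := by
    have h := hbound (s i) (fun ρ => if ρ i = some (s i) then w ρ else 0)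
      (hw.ite hq fun ρ j b hj h => by
        rwa [update_of_ne]
        rintro rfl
        simp [h] at hj)
      (fun ρ h => by simpa using (ite_ne_right_iff.1 h).1)
    simpa only [ite_mul, zero_mul, ← sum_filter, filter_satisfiers] using h
  have hstar (b : Bool) :
      ∑ ρ ∈ nonFalsifiers V s with ρ i = none, w ρ * Ψ (update ρ i (some b)) ≤ K b * (q * Z) := by
    rw [sum_filter_eq_none_mul_update (update_mem_nonFalsifiers hi s)]
    exact (hbound b _ (hw.starPart hq i b) fun ρ h => (ite_ne_right_iff.1 h).1).trans
      (mul_le_mul_of_nonneg_left (sum_satisfiers_starPart_le hw hi s b) (hK b))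
  have hquery : ∑ ρ ∈ nonFalsifiers V s with ρ i = none, w ρ * Ψ ρ ≤
      ∑ ρ ∈ nonFalsifiers V s with ρ i = none, w ρ * Ψ (update ρ i (some true)) +
        ∑ ρ ∈ nonFalsifiers V s with ρ i = none, w ρ * Ψ (update ρ i (some false)) := by
    rw [← sum_add_distrib]
    refine sum_le_sum fun ρ hρ => ?_
    rw [← mul_add]
    exact mul_le_mul_of_nonneg_left (hΨ ρ (mem_filter.1 hρ).2) (hw.nonneg ρ)
  rw [sum_nonFalsifiers_insert]
  linarith [hstar true, hstar false]

theorem sum_nonFalsifiers_le {q C : ℝ} (hq : 0 ≤ q) (hC : 0 ≤ C) {Ψ : Restriction ι → ℝ}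
    (hΨ : ∀ ρ i, ρ i = none →
      Ψ ρ ≤ Ψ (update ρ i (some true)) + Ψ (update ρ i (some false)))
    (hbound : ∀ w, IsStarBounded q w → ∑ ρ, w ρ * Ψ ρ ≤ C * ∑ ρ, w ρ)
    (V : Finset ι) (s : ι → Bool) {w : Restriction ι → ℝ} (hw : IsStarBounded q w) :
    ∑ ρ ∈ nonFalsifiers V s, w ρ * Ψ ρ ≤
      C * (1 + 2 * q) ^ #V * ∑ ρ ∈ satisfiers V s, w ρ := by
  induction V using Finset.induction_on generalizing w with
  | empty => simpa [satisfiers, nonFalsifiers] using hbound w hw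
  | insert i V hi ih =>
    have h := sum_nonFalsifiers_insert_le hq hw hi (fun ρ => hΨ ρ i)
      (K := fun _ => C * (1 + 2 * q) ^ #V) (fun _ => by positivity) fun _ v hv _ => ih hv
    rw [card_insert_of_notMem hi, pow_succ]
    convert h using 2
    ring

namespace IsQuerySubadditive

variable {Φ : ((ι → Bool) → ℝ) → ℝ} {q C : ℝ}

theorem sum_nonFalsifiers_decisionRule_insert_le (hΦ : IsQuerySubadditive Φ) (hq : 0 ≤ q)
    (hC : 0 ≤ C) {f : (ι → Bool) → ℝ}
    (hbound : ∀ w, IsStarBounded q w → ∑ ρ, w ρ * Φ (restrictCube ρ f) ≤ C * ∑ ρ, w ρ)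
    {c D : ℝ} {V : Finset ι} {s : ι → Bool} {v : Restriction ι → ℝ} (hv : IsStarBounded q v)
    (hV : ∑ ρ ∈ nonFalsifiers V s, v ρ * Φ (restrictCube ρ (decisionRule V s c f)) ≤
      D * ∑ ρ ∈ satisfiers V s, v ρ)
    {i : ι} {b : Bool} (hvi : ∀ ρ, v ρ ≠ 0 → ρ i = some b) :
    ∑ ρ ∈ nonFalsifiers V s, v ρ * Φ (restrictCube ρ (decisionRule (insert i V) s c f)) ≤
      (if b = s i then D else C * (1 + 2 * q) ^ #V) * ∑ ρ ∈ satisfiers V s, v ρ := by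
  have hcongr {g : (ι → Bool) → ℝ} (hg : ∀ ρ, ρ i = some b →
      restrictCube ρ (decisionRule (insert i V) s c f) = restrictCube ρ g) :
      ∑ ρ ∈ nonFalsifiers V s, v ρ * Φ (restrictCube ρ (decisionRule (insert i V) s c f)) =
        ∑ ρ ∈ nonFalsifiers V s, v ρ * Φ (restrictCube ρ g) := by
    refine sum_congr rfl fun ρ _ => ?_
    rcases eq_or_ne (v ρ) 0 with h0 | h0
    · simp [h0]
    · rw [hg ρ (hvi ρ h0)]
  split_ifs with hb
  · rw [hcongr fun ρ hρ => restrictCube_decisionRule_insert (hb ▸ hρ) V c f]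
    exact hV
  · rw [hcongr fun ρ hρ => restrictCube_decisionRule_of_falsified c f (mem_insert_self i V)
      (Bool.eq_not.2 hb ▸ hρ)]
    exact sum_nonFalsifiers_le hq hC (hΦ.restrictCube_le_add f) hbound V s hv

/-- The improvement by `C - 1` over `sum_nonFalsifiers_le` reflects that among the answers to the
queried variables of the term, the satisfying one leads to a constant. -/
theorem sum_nonFalsifiers_decisionRule_le (hΦ : IsQuerySubadditive Φ) (hq : 0 ≤ q) (hC : 1 ≤ C)
    {f : (ι → Bool) → ℝ}
    (hbound : ∀ w, IsStarBounded q w → ∑ ρ, w ρ * Φ (restrictCube ρ f) ≤ C * ∑ ρ, w ρ)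
    {c : ℝ} (hc : |c| ≤ 1) (V : Finset ι) (s : ι → Bool) {w : Restriction ι → ℝ}
    (hw : IsStarBounded q w) :
    ∑ ρ ∈ nonFalsifiers V s, w ρ * Φ (restrictCube ρ (decisionRule V s c f)) ≤
      (C * (1 + 2 * q) ^ #V - (C - 1)) * ∑ ρ ∈ satisfiers V s, w ρ := by
  have hC0 : 0 ≤ C := by linarith
  induction V using Finset.induction_on generalizing w with
  | empty =>
    simp only [nonFalsifiers, satisfiers, notMem_empty, false_imp_iff, implies_true, filter_true,
      decisionRule_empty, card_empty, pow_zero, mul_one, sub_sub_cancel, one_mul]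
    exact sum_le_sum fun ρ _ => mul_le_of_le_one_right (hw.nonneg ρ) (hΦ.const_le_one c hc)
  | insert i V hi ih =>
    set B := C * (1 + 2 * q) ^ #V with hB
    have hCB : C ≤ B := le_mul_of_one_le_right hC0 (one_le_pow₀ (by linarith))
    have hquery := sum_nonFalsifiers_insert_le hq hw hi
      (hΦ.restrictCube_le_add (decisionRule (insert i V) s c f) · i)
      (K := fun b => if b = s i then B - (C - 1) else B)
      (fun b => by split_ifs <;> linarith)
      (fun b v hv hvi => hΦ.sum_nonFalsifiers_decisionRule_insert_le hq hC0 hbound hv (ih hv) hvi)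
    refine hquery.trans (mul_le_mul_of_nonneg_right ?_ (sum_nonneg fun ρ _ => hw.nonneg ρ))
    have hsum : (if true = s i then B - (C - 1) else B) +
        (if false = s i then B - (C - 1) else B) = 2 * B - (C - 1) := by
      cases s i <;> simp <;> ring
    rw [if_pos rfl, hsum, card_insert_of_notMem hi, pow_succ, hB]
    nlinarith [mul_nonneg hq (sub_nonneg.2 hC)]

theorem sum_mul_restrictCube_decisionRule_le (hΦ : IsQuerySubadditive Φ) (hq : 0 ≤ q) (hC : 1 ≤ C)
    {f : (ι → Bool) → ℝ}
    (hbound : ∀ w, IsStarBounded q w → ∑ ρ, w ρ * Φ (restrictCube ρ f) ≤ C * ∑ ρ, w ρ)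
    {c : ℝ} (hc : |c| ≤ 1) {V : Finset ι} (hV : C * (1 + 2 * q) ^ #V ≤ 2 * C - 1)
    (s : ι → Bool) {w : Restriction ι → ℝ} (hw : IsStarBounded q w) :
    ∑ ρ, w ρ * Φ (restrictCube ρ (decisionRule V s c f)) ≤ C * ∑ ρ, w ρ := by
  have hnonFalsifiers :
      ∑ ρ with ρ ∈ nonFalsifiers V s, w ρ * Φ (restrictCube ρ (decisionRule V s c f)) ≤
        C * ∑ ρ with ρ ∈ nonFalsifiers V s, w ρ := by
    rw [filter_univ_mem]
    calc ∑ ρ ∈ nonFalsifiers V s, w ρ * Φ (restrictCube ρ (decisionRule V s c f))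
        ≤ (C * (1 + 2 * q) ^ #V - (C - 1)) * ∑ ρ ∈ satisfiers V s, w ρ :=
          hΦ.sum_nonFalsifiers_decisionRule_le hq hC hbound hc V s hw
      _ ≤ C * ∑ ρ ∈ satisfiers V s, w ρ :=
          mul_le_mul_of_nonneg_right (by linarith) (sum_nonneg fun ρ _ => hw.nonneg ρ)
      _ ≤ C * ∑ ρ ∈ nonFalsifiers V s, w ρ :=
          mul_le_mul_of_nonneg_left (sum_le_sum_of_subset_of_nonneg
            (satisfiers_subset_nonFalsifiers V s) fun ρ _ _ => hw.nonneg ρ) (by linarith)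
  have hfalsifying :
      ∑ ρ with ρ ∉ nonFalsifiers V s, w ρ * Φ (restrictCube ρ (decisionRule V s c f)) ≤
        C * ∑ ρ with ρ ∉ nonFalsifiers V s, w ρ := by
    have h := hbound (fun ρ => if ρ ∉ nonFalsifiers V s then w ρ else 0)
      (hw.ite hq fun ρ i b hi hρ hmem => hρ <| mem_nonFalsifiers.2 fun j hj => by
        rcases eq_or_ne j i with rfl | hji
        · simp [hi]
        · simpa [hji] using mem_nonFalsifiers.1 hmem j hj)
    simp only [ite_mul, zero_mul, ← sum_filter] at h
    convert h using 1
    refine sum_congr rfl fun ρ hρ => ?_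
    obtain ⟨i, hi, hρi⟩ : ∃ i ∈ V, ρ i = some (!s i) := by
      simpa [mem_nonFalsifiers] using hρ
    rw [restrictCube_decisionRule_of_falsified c f hi hρi]
  rw [← sum_filter_add_sum_filter_not univ (· ∈ nonFalsifiers V s),
    ← sum_filter_add_sum_filter_not univ (· ∈ nonFalsifiers V s) w, mul_add]
  exact add_le_add hnonFalsifiers hfalsifying

/-- A weak form of the switching lemma, for decision lists. -/
theorem sum_mul_restrictCube_le (hΦ : IsQuerySubadditive Φ) (hq : 0 ≤ q) (hC : 1 ≤ C) {k : ℕ}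
    (hk : C * (1 + 2 * q) ^ k ≤ 2 * C - 1) {f : (ι → Bool) → ℝ} (hf : IsDecisionList k f)
    {w : Restriction ι → ℝ} (hw : IsStarBounded q w) :
    ∑ ρ, w ρ * Φ (restrictCube ρ f) ≤ C * ∑ ρ, w ρ := by
  induction hf generalizing w with
  | const c hc =>
    rw [mul_comm, sum_mul]
    exact sum_le_sum fun ρ _ =>
      mul_le_mul_of_nonneg_left ((hΦ.const_le_one c hc).trans hC) (hw.nonneg ρ)
  | cons V s c f hV hc _ ih =>
    have hV' : C * (1 + 2 * q) ^ #V ≤ 2 * C - 1 :=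
      (mul_le_mul_of_nonneg_left (pow_le_pow_right₀ (by linarith) hV) (by linarith)).trans hk
    exact hΦ.sum_mul_restrictCube_decisionRule_le hq hC (fun _ => ih) hc hV' s hw

end IsQuerySubadditive

end Restrictions

section Fourier

variable {ι : Type*} {n : ℕ}

/-- The identification `b ↦ 2b - 1` of `{0, 1}` with `{-1, 1}`. -/
def boolSign (b : Bool) : ℝ := if b then 1 else -1

/-- The Walsh character `χ_S`. -/
noncomputable def walsh (S : Finset ι) (x : ι → Bool) : ℝ := ∏ i ∈ S, boolSign (x i)

theorem pbFourier_eq_sum_walsh (f : (Fin n → Bool) → ℝ) (S : Finset (Fin n)) :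
    pbFourier f S = (∑ x, f x * walsh S x) / 2 ^ n := rfl

theorem walsh_eq_prod_univ [Fintype ι] [DecidableEq ι] (S : Finset ι) (x : ι → Bool) :
    walsh S x = ∏ i, if i ∈ S then boolSign (x i) else 1 :=
  (Fintype.prod_ite_mem S fun i => boolSign (x i)).symm

theorem sum_walsh_mul_walsh (x y : Fin n → Bool) :
    ∑ S, walsh S x * walsh S y = if x = y then 2 ^ n else 0 := by
  have hcoord (i : Fin n) :
      1 + boolSign (x i) * boolSign (y i) = if x i = y i then 2 else 0 := by
    cases x i <;> cases y i <;> norm_num [boolSign]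
  calc ∑ S, walsh S x * walsh S y
      = ∏ i, (1 + boolSign (x i) * boolSign (y i)) := by
        simp only [prod_one_add, powerset_univ, walsh, prod_mul_distrib]
    _ = if x = y then 2 ^ n else 0 := by
        simp only [hcoord, Fintype.prod_ite_zero, funext_iff, prod_const, card_univ,
          Fintype.card_fin]

theorem sum_pbFourier_mul_walsh (f : (Fin n → Bool) → ℝ) (x : Fin n → Bool) :
    ∑ S, pbFourier f S * walsh S x = f x := by
  simp only [pbFourier_eq_sum_walsh, div_mul_eq_mul_div, sum_mul, mul_assoc]
  rw [← sum_div, sum_comm]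
  simp [← mul_sum, sum_walsh_mul_walsh]

theorem sum_sq_div_eq_sum_pbFourier_sq (f : (Fin n → Bool) → ℝ) :
    (∑ x, f x ^ 2) / 2 ^ n = ∑ S, pbFourier f S ^ 2 := by
  calc (∑ x, f x ^ 2) / 2 ^ n
      = (∑ x, ∑ S, pbFourier f S * (f x * walsh S x)) / 2 ^ n := by
        simp only [mul_left_comm _ (f _), ← mul_sum, sum_pbFourier_mul_walsh, sq]
    _ = ∑ S, pbFourier f S * ((∑ x, f x * walsh S x) / 2 ^ n) := by
        rw [sum_comm, sum_div]
        simp only [mul_sum, mul_div_assoc, sum_div]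
    _ = ∑ S, pbFourier f S ^ 2 := by simp only [← pbFourier_eq_sum_walsh, sq]

theorem pbFourier_sum_mul {α : Type*} (A : Finset α) (c : α → ℝ) (F : α → (Fin n → Bool) → ℝ)
    (S : Finset (Fin n)) :
    pbFourier (fun x => ∑ a ∈ A, c a * F a x) S = ∑ a ∈ A, c a * pbFourier (F a) S := by
  simp only [pbFourier_eq_sum_walsh, sum_mul]
  rw [sum_comm, sum_div]
  simp only [mul_assoc, ← mul_sum, mul_div_assoc]

theorem pbFourier_sub (f g : (Fin n → Bool) → ℝ) (S : Finset (Fin n)) :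
    pbFourier (fun x => f x - g x) S = pbFourier f S - pbFourier g S := by
  simp only [pbFourier_eq_sum_walsh, sub_mul, sum_sub_distrib, sub_div]

/-- The Fourier transform of `f ↦ f|ρ` is the tensor product over the coordinates `i` of the
kernels `restrictKernel (ρ i)`: the entry at `u`, `s` is the coefficient at `s` of the restriction
of the character `u` of `{-1, 1}`, where `true` stands for the nontrivial character. -/
def restrictKernel : Option Bool → Bool → Bool → ℝ
  | none, u, s => if u = s then 1 else 0
  | some _, _, true => 0
  | some _, false, false => 1
  | some b, true, false => boolSign b

theorem restrictKernel_eq_sum (o : Option Bool) (u s : Bool) :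
    restrictKernel o u s =
      (∑ b, (if u then boolSign (o.getD b) else 1) * (if s then boolSign b else 1)) / 2 := by
  rcases o with _ | b <;> cases u <;> cases s <;> norm_num [restrictKernel, boolSign]

theorem pbFourier_restrictCube_walsh (ρ : Restriction (Fin n)) (U S : Finset (Fin n)) :
    pbFourier (restrictCube ρ (walsh U)) S = ∏ i, restrictKernel (ρ i) (i ∈ U) (i ∈ S) := by
  simp only [restrictKernel_eq_sum, decide_eq_true_eq, prod_div_distrib, prod_const, card_univ,
    Fintype.card_fin, Fintype.prod_sum, prod_mul_distrib]
  simp only [pbFourier_eq_sum_walsh, restrictCube, walsh_eq_prod_univ]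

theorem pbFourier_restrictCube (ρ : Restriction (Fin n)) (f : (Fin n → Bool) → ℝ)
    (S : Finset (Fin n)) :
    pbFourier (restrictCube ρ f) S =
      ∑ U, pbFourier f U * pbFourier (restrictCube ρ (walsh U)) S := by
  rw [← pbFourier_sum_mul]
  congr 1
  funext x
  exact (sum_pbFourier_mul_walsh f _).symm

theorem prod_ite_mem_iff_mem [Fintype ι] [DecidableEq ι] (U V : Finset ι) (c : ι → ℝ) :
    (∏ i, if i ∈ U ↔ i ∈ V then c i else 0) = if U = V then ∏ i, c i else 0 := by
  simp [Fintype.prod_ite_zero, Finset.ext_iff]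

theorem pbFourier_walsh (U S : Finset (Fin n)) :
    pbFourier (walsh U) S = if U = S then 1 else 0 := by
  have h : pbFourier (walsh U) S = _ := pbFourier_restrictCube_walsh (fun _ => none) U S
  simpa [restrictKernel, prod_ite_mem_iff_mem] using h

theorem pbFourier_const (c : ℝ) (S : Finset (Fin n)) :
    pbFourier (fun _ => c) S = if S = ∅ then c else 0 := by
  have h := pbFourier_sum_mul {∅} (fun _ => c) walsh S
  simpa [walsh, pbFourier_walsh, eq_comm] using h

theorem sum_finset_prod_mem [Fintype ι] [DecidableEq ι] (G : ι → Bool → ℝ) :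
    ∑ S : Finset ι, ∏ i, G i (i ∈ S) = ∏ i, ∑ b, G i b := by
  simp only [Fintype.sum_bool, Fintype.prod_add]
  refine sum_congr rfl fun S _ => ?_
  rw [← prod_mul_prod_compl S]
  congr 1 <;> refine prod_congr rfl fun i hi => ?_
  · rw [decide_eq_true hi]
  · rw [decide_eq_false (mem_compl.1 hi)]

/-- The probability of the restriction `ρ` under the `p`-random restriction, which independently
leaves each variable free with probability `p` and sets it to a uniform bit otherwise. -/
noncomputable def restrictionProb [Fintype ι] (p : ℝ) (ρ : Restriction ι) : ℝ :=
  ∏ i, if ρ i = none then p else (1 - p) / 2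

theorem sum_restrictionProb_mul_prod [Fintype ι] [DecidableEq ι] (p : ℝ)
    (G : ι → Option Bool → ℝ) :
    ∑ ρ, restrictionProb p ρ * ∏ i, G i (ρ i) =
      ∏ i, (p * G i none + (1 - p) / 2 * (G i (some true) + G i (some false))) := by
  simp only [restrictionProb, ← prod_mul_distrib]
  rw [← Fintype.prod_sum fun i o => (if o = none then p else (1 - p) / 2) * G i o]
  simp [Fintype.sum_option, mul_add]

theorem sum_restrictionProb [Fintype ι] [DecidableEq ι] (p : ℝ) :
    ∑ ρ : Restriction ι, restrictionProb p ρ = 1 := by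
  have h := sum_restrictionProb_mul_prod p fun (_ : ι) _ => 1
  have hone : p + (1 - p) / 2 * (1 + 1) = 1 := by ring
  simpa only [mul_one, hone, prod_const_one] using h

theorem isStarBounded_restrictionProb [Fintype ι] [DecidableEq ι] {p : ℝ} (hp0 : 0 ≤ p)
    (hp1 : p < 1) :
    IsStarBounded (2 * p / (1 - p)) (restrictionProb (ι := ι) p) where
  nonneg ρ := prod_nonneg fun i _ => by split_ifs <;> linarith
  le_mul_update ρ i b hi := by
    have h1p : 1 - p ≠ 0 := by linarith
    refine le_of_eq ?_
    unfold restrictionProb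
    rw [← mul_prod_erase univ _ (mem_univ i), ← mul_prod_erase univ _ (mem_univ i),
      ← mul_assoc]
    congr 1
    · rw [if_pos hi, update_self, if_neg (Option.some_ne_none b)]
      field_simp
    · exact prod_congr rfl fun j hj => by rw [update_of_ne (ne_of_mem_erase hj)]

theorem sum_restrictionProb_mul_pbFourier (p : ℝ) (f : (Fin n → Bool) → ℝ) (S : Finset (Fin n)) :
    ∑ ρ, restrictionProb p ρ * pbFourier (restrictCube ρ f) S = p ^ #S * pbFourier f S := by
  have hcoord (U : Finset (Fin n)) (i : Fin n) :
      p * restrictKernel none (i ∈ U) (i ∈ S) + (1 - p) / 2 *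
        (restrictKernel (some true) (i ∈ U) (i ∈ S) + restrictKernel (some false) (i ∈ U) (i ∈ S)) =
      if i ∈ U ↔ i ∈ S then if i ∈ S then p else 1 else 0 := by
    by_cases hU : i ∈ U <;> by_cases hS : i ∈ S <;> simp [hU, hS, restrictKernel, boolSign]
    ring
  have hwalsh (U : Finset (Fin n)) :
      ∑ ρ, restrictionProb p ρ * pbFourier (restrictCube ρ (walsh U)) S =
        if U = S then p ^ #S else 0 := by
    simp only [pbFourier_restrictCube_walsh]
    rw [sum_restrictionProb_mul_prod p fun i o => restrictKernel o (i ∈ U) (i ∈ S)]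
    simp only [hcoord, prod_ite_mem_iff_mem, Fintype.prod_ite_mem, prod_const]
  simp only [pbFourier_restrictCube _ f, mul_sum]
  rw [sum_comm]
  simp only [mul_left_comm, ← mul_sum, hwalsh]
  simp [mul_comm]

theorem sum_restrictionProb_mul_sum_walsh (p : ℝ) (U V : Finset (Fin n)) :
    ∑ ρ, restrictionProb p ρ * ∑ S, 2 ^ #S *
      (pbFourier (restrictCube ρ (walsh U)) S * pbFourier (restrictCube ρ (walsh V)) S) =
      if U = V then (1 + p) ^ #U else 0 := by
  let G (i : Fin n) (o : Option Bool) (s : Bool) : ℝ :=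
    (if s then 2 else 1) * (restrictKernel o (i ∈ U) s * restrictKernel o (i ∈ V) s)
  have hG (ρ : Restriction (Fin n)) (S : Finset (Fin n)) :
      2 ^ #S * (pbFourier (restrictCube ρ (walsh U)) S * pbFourier (restrictCube ρ (walsh V)) S) =
        ∏ i, G i (ρ i) (i ∈ S) := by
    simp only [G, prod_mul_distrib, pbFourier_restrictCube_walsh, decide_eq_true_eq,
      Fintype.prod_ite_mem, prod_const]
  have hcoord (i : Fin n) :
      p * ∑ s, G i none s + (1 - p) / 2 * (∑ s, G i (some true) s + ∑ s, G i (some false) s) =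
        if i ∈ U ↔ i ∈ V then if i ∈ U then 1 + p else 1 else 0 := by
    by_cases hU : i ∈ U <;> by_cases hV : i ∈ V <;> simp [G, hU, hV, restrictKernel, boolSign]
    all_goals ring
  simp only [hG, sum_finset_prod_mem]
  rw [sum_restrictionProb_mul_prod p fun i o => ∑ s, G i o s]
  simp only [hcoord, prod_ite_mem_iff_mem, Fintype.prod_ite_mem, prod_const]

theorem sum_mul_sum_mul_sq {α β : Type*} [Fintype α] [Fintype β] (w : α → ℝ) (c : β → ℝ)
    (M : β → α → ℝ) :
    ∑ a, w a * (∑ b, c b * M b a) ^ 2 =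
      ∑ b, ∑ b', c b * c b' * ∑ a, w a * (M b a * M b' a) := by
  simp only [sq, sum_mul_sum]
  simp only [mul_sum]
  rw [sum_comm]
  refine sum_congr rfl fun b _ => ?_
  rw [sum_comm]
  exact sum_congr rfl fun b' _ => sum_congr rfl fun a _ => by ring

theorem sum_restrictionProb_mul_sum_pbFourier_sq (p : ℝ) (f : (Fin n → Bool) → ℝ) :
    ∑ ρ, restrictionProb p ρ * ∑ S, 2 ^ #S * pbFourier (restrictCube ρ f) S ^ 2 =
      ∑ U, (1 + p) ^ #U * pbFourier f U ^ 2 := by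
  calc ∑ ρ, restrictionProb p ρ * ∑ S, 2 ^ #S * pbFourier (restrictCube ρ f) S ^ 2
      = ∑ U, ∑ V, pbFourier f U * pbFourier f V *
          ∑ ρ, restrictionProb p ρ * ∑ S, 2 ^ #S * (pbFourier (restrictCube ρ (walsh U)) S *
            pbFourier (restrictCube ρ (walsh V)) S) := by
        have h := sum_mul_sum_mul_sq
          (fun y : Restriction (Fin n) × Finset (Fin n) => restrictionProb p y.1 * 2 ^ #y.2)
          (pbFourier f) fun U y => pbFourier (restrictCube y.1 (walsh U)) y.2
        simpa only [Fintype.sum_prod_type, mul_assoc (restrictionProb p _), ← mul_sum univ _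
          (restrictionProb p _), ← pbFourier_restrictCube _ f] using h
    _ = ∑ U, (1 + p) ^ #U * pbFourier f U ^ 2 := by
        simp only [sum_restrictionProb_mul_sum_walsh, mul_ite, mul_zero, sum_ite_eq, mem_univ,
          if_true]
        exact sum_congr rfl fun U _ => by ring

theorem sum_eq_sum_update_div_two [Fintype ι] [DecidableEq ι] (h : (ι → Bool) → ℝ) (i : ι) :
    ∑ x, h x = (∑ x, h (update x i true) + ∑ x, h (update x i false)) / 2 := by
  have hflip : Involutive fun x : ι → Bool => update x i (!x i) := fun x => by simp
  have hsum : ∑ x, h (update x i (!x i)) = ∑ x, h x := Equiv.sum_comp hflip.toPerm h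
  have hpair (x : ι → Bool) :
      h x + h (update x i (!x i)) = h (update x i true) + h (update x i false) := by
    conv_lhs => rw [← update_eq_self i x]
    cases x i <;> simp [add_comm]
  rw [← sum_add_distrib, ← sum_congr rfl fun x _ => hpair x, sum_add_distrib, hsum]
  ring

theorem walsh_update [DecidableEq ι] {S : Finset ι} {i : ι} (hi : i ∉ S) (x : ι → Bool)
    (b : Bool) : walsh S (update x i b) = walsh S x :=
  prod_congr rfl fun j hj => by rw [update_of_ne (ne_of_mem_of_not_mem hj hi)]

theorem walsh_insert_update [DecidableEq ι] {S : Finset ι} {i : ι} (hi : i ∉ S) (x : ι → Bool)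
    (b : Bool) : walsh (insert i S) (update x i b) = boolSign b * walsh S x := by
  rw [← walsh_update hi x b, walsh, prod_insert hi, update_self, walsh]

section Update

variable (f : (Fin n → Bool) → ℝ) {S : Finset (Fin n)} {i : Fin n}

theorem pbFourier_eq_half_add (hi : i ∉ S) :
    pbFourier f S = (pbFourier (fun x => f (update x i true)) S +
      pbFourier (fun x => f (update x i false)) S) / 2 := by
  simp only [pbFourier_eq_sum_walsh]
  rw [sum_eq_sum_update_div_two _ i]
  simp only [walsh_update hi]
  ring

theorem pbFourier_insert_eq_half_sub (hi : i ∉ S) :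
    pbFourier f (insert i S) = (pbFourier (fun x => f (update x i true)) S -
      pbFourier (fun x => f (update x i false)) S) / 2 := by
  simp only [pbFourier_eq_sum_walsh]
  rw [sum_eq_sum_update_div_two _ i]
  simp only [walsh_insert_update hi, boolSign, if_true, Bool.false_eq_true, if_false, neg_one_mul,
    one_mul, mul_neg, sum_neg_distrib]
  ring

theorem pbFourier_update_insert (hi : i ∉ S) (b : Bool) :
    pbFourier (fun x => f (update x i b)) (insert i S) = 0 := by
  simp [pbFourier_insert_eq_half_sub (fun x => f (update x i b)) hi]

end Update

theorem sum_finset_eq_sum_add_insert [Fintype ι] [DecidableEq ι] (G : Finset ι → ℝ) (i : ι) :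
    ∑ S, G S = ∑ S ∈ (univ.erase i).powerset, (G S + G (insert i S)) := by
  rw [sum_add_distrib, ← sum_powerset_insert (notMem_erase i _), insert_erase (mem_univ i),
    powerset_univ]

/-- For a measure given by a sum over the spectrum, query subadditivity is an inequality between
the coefficients `a`, `b` of the two subfunctions at `S`, as `f` has the coefficients `(a ± b) / 2`
at `S` and `insert i S`. -/
theorem isQuerySubadditive_sum {φ : ℕ → ℝ → ℝ} (hφ0 : ∀ m, φ m 0 = 0)
    (hφ : ∀ m a b, φ m ((a + b) / 2) + φ (m + 1) ((a - b) / 2) ≤ φ m a + φ m b)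
    (hconst : ∀ c, |c| ≤ 1 → φ 0 c ≤ 1) :
    IsQuerySubadditive fun f : (Fin n → Bool) → ℝ => ∑ S, φ #S (pbFourier f S) where
  le_add f i := by
    rw [← sum_add_distrib, sum_finset_eq_sum_add_insert _ i, sum_finset_eq_sum_add_insert _ i]
    refine sum_le_sum fun S hS => ?_
    have hi : i ∉ S := fun h => notMem_erase i univ (mem_powerset.1 hS h)
    simpa [pbFourier_update_insert f hi, hφ0, card_insert_of_notMem hi,
      ← pbFourier_eq_half_add f hi, ← pbFourier_insert_eq_half_sub f hi] using
      hφ #S (pbFourier (fun x => f (update x i true)) S)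
        (pbFourier (fun x => f (update x i false)) S)
  const_le_one c hc := by
    rw [sum_eq_single ∅ (fun S _ hS => by rw [pbFourier_const, if_neg hS, hφ0]) (by simp)]
    simpa [pbFourier_const] using hconst c hc

theorem isQuerySubadditive_sum_abs_pbFourier :
    IsQuerySubadditive fun f : (Fin n → Bool) → ℝ => ∑ S, |pbFourier f S| :=
  isQuerySubadditive_sum (φ := fun _ a => |a|) (fun _ => abs_zero)
    (fun _ a b => by
      rw [abs_div, abs_div, abs_two]
      linarith [abs_add_le a b, abs_sub a b])
    fun _ hc => hc

theorem isQuerySubadditive_sum_two_pow_mul_pbFourier_sq :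
    IsQuerySubadditive fun f : (Fin n → Bool) → ℝ => ∑ S, 2 ^ #S * pbFourier f S ^ 2 :=
  isQuerySubadditive_sum (φ := fun m a => 2 ^ m * a ^ 2) (fun _ => by simp)
    (fun m a b => by
      have h : ((a + b) / 2) ^ 2 + 2 * ((a - b) / 2) ^ 2 ≤ a ^ 2 + b ^ 2 := by
        linarith [sq_nonneg (a + b)]
      rw [pow_succ 2 m, ← mul_add, mul_assoc, ← mul_add]
      exact mul_le_mul_of_nonneg_left h (by positivity))
    fun c hc => by simpa using hc

section SpectralBounds

variable {k : ℕ} {f : (Fin n → Bool) → ℝ} {p C : ℝ}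

theorem IsDecisionList.sum_restrictionProb_mul_le (hf : IsDecisionList k f)
    {Φ : ((Fin n → Bool) → ℝ) → ℝ} (hΦ : IsQuerySubadditive Φ) (hp0 : 0 ≤ p) (hp1 : p < 1)
    (hC : 1 ≤ C) (hk : C * (1 + 4 * p / (1 - p)) ^ k ≤ 2 * C - 1) :
    ∑ ρ, restrictionProb p ρ * Φ (restrictCube ρ f) ≤ C := by
  have hq : 0 ≤ 2 * p / (1 - p) := div_nonneg (by linarith) (by linarith)
  have hk' : C * (1 + 2 * (2 * p / (1 - p))) ^ k ≤ 2 * C - 1 := by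
    convert hk using 4
    ring
  simpa [sum_restrictionProb] using
    hΦ.sum_mul_restrictCube_le hq hC hk' hf (isStarBounded_restrictionProb hp0 hp1)

theorem IsDecisionList.sum_pow_mul_abs_pbFourier_le (hf : IsDecisionList k f) (hp0 : 0 ≤ p)
    (hp1 : p < 1) (hC : 1 ≤ C) (hk : C * (1 + 4 * p / (1 - p)) ^ k ≤ 2 * C - 1) :
    ∑ S, p ^ #S * |pbFourier f S| ≤ C := by
  calc ∑ S, p ^ #S * |pbFourier f S|
      = ∑ S, |∑ ρ, restrictionProb p ρ * pbFourier (restrictCube ρ f) S| := by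
        simp only [sum_restrictionProb_mul_pbFourier, abs_mul, abs_pow, abs_of_nonneg hp0]
    _ ≤ ∑ S, ∑ ρ, restrictionProb p ρ * |pbFourier (restrictCube ρ f) S| := by
        refine sum_le_sum fun S _ => (abs_sum_le_sum_abs _ _).trans_eq ?_
        simp only [abs_mul, abs_of_nonneg ((isStarBounded_restrictionProb hp0 hp1).nonneg _)]
    _ = ∑ ρ, restrictionProb p ρ * ∑ S, |pbFourier (restrictCube ρ f) S| := by
        simp only [mul_sum]
        exact sum_comm
    _ ≤ C := hf.sum_restrictionProb_mul_le isQuerySubadditive_sum_abs_pbFourier hp0 hp1 hC hk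

theorem IsDecisionList.sum_one_add_pow_mul_pbFourier_sq_le (hf : IsDecisionList k f) (hp0 : 0 ≤ p)
    (hp1 : p < 1) (hC : 1 ≤ C) (hk : C * (1 + 4 * p / (1 - p)) ^ k ≤ 2 * C - 1) :
    ∑ S, (1 + p) ^ #S * pbFourier f S ^ 2 ≤ C := by
  rw [← sum_restrictionProb_mul_sum_pbFourier_sq]
  exact hf.sum_restrictionProb_mul_le isQuerySubadditive_sum_two_pow_mul_pbFourier_sq hp0 hp1 hC hk

end SpectralBounds

theorem pow_mul_sum_card_le_le [Fintype ι] {p : ℝ} (hp0 : 0 ≤ p) (hp1 : p ≤ 1) {a : Finset ι → ℝ}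
    (ha : ∀ S, 0 ≤ a S) (τ : ℕ) :
    p ^ τ * ∑ S with #S ≤ τ, a S ≤ ∑ S, p ^ #S * a S := by
  rw [mul_sum]
  refine (sum_le_sum fun S hS => ?_).trans
    (sum_le_univ_sum_of_nonneg fun S => mul_nonneg (pow_nonneg hp0 _) (ha S))
  exact mul_le_mul_of_nonneg_right (pow_le_pow_of_le_one hp0 hp1 (mem_filter.1 hS).2) (ha S)

theorem pow_mul_sum_lt_card_le [Fintype ι] {q : ℝ} (hq : 1 ≤ q) {a : Finset ι → ℝ}
    (ha : ∀ S, 0 ≤ a S) (τ : ℕ) :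
    q ^ τ * ∑ S with ¬#S ≤ τ, a S ≤ ∑ S, q ^ #S * a S := by
  rw [mul_sum]
  refine (sum_le_sum fun S hS => ?_).trans
    (sum_le_univ_sum_of_nonneg fun S => mul_nonneg (by positivity) (ha S))
  exact mul_le_mul_of_nonneg_right
    (pow_le_pow_right₀ hq (not_le.1 (mem_filter.1 hS).2).le) (ha S)

/-- The part of the Fourier expansion of `f` supported on the family `H`. -/
noncomputable def fourierPart (H : Finset (Finset (Fin n))) (f : (Fin n → Bool) → ℝ) :
    (Fin n → Bool) → ℝ :=
  fun x => ∑ S ∈ H, pbFourier f S * walsh S x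

theorem pbFourier_fourierPart (H : Finset (Finset (Fin n))) (f : (Fin n → Bool) → ℝ)
    (S : Finset (Fin n)) : pbFourier (fourierPart H f) S = if S ∈ H then pbFourier f S else 0 := by
  unfold fourierPart
  simp [pbFourier_sum_mul, pbFourier_walsh]

theorem ncard_pbFourier_fourierPart_ne_zero_le (H : Finset (Finset (Fin n)))
    (f : (Fin n → Bool) → ℝ) : {S | pbFourier (fourierPart H f) S ≠ 0}.ncard ≤ #H := by
  rw [← Set.ncard_coe_finset]
  refine Set.ncard_le_ncard (fun S hS => ?_) H.finite_toSet
  rw [Set.mem_ofPred_eq, pbFourier_fourierPart] at hS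
  exact (ite_ne_right_iff.1 hS).1

theorem ncard_pbFourier_const_ne_zero_le_one (c : ℝ) :
    {S : Finset (Fin n) | pbFourier (fun _ => c) S ≠ 0}.ncard ≤ 1 := by
  rw [← Set.ncard_singleton (∅ : Finset (Fin n))]
  refine Set.ncard_le_ncard (fun S hS => ?_) (Set.finite_singleton _)
  rw [Set.mem_ofPred_eq, pbFourier_const] at hS
  exact (ite_ne_right_iff.1 hS).1

theorem sum_sub_fourierPart_sq_div (H : Finset (Finset (Fin n))) (f : (Fin n → Bool) → ℝ) :
    (∑ x, (f x - fourierPart H f x) ^ 2) / 2 ^ n = ∑ S ∈ Hᶜ, pbFourier f S ^ 2 := by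
  rw [sum_sq_div_eq_sum_pbFourier_sq fun x => f x - fourierPart H f x, ← Fintype.sum_ite_mem Hᶜ]
  refine sum_congr rfl fun S _ => ?_
  rw [pbFourier_sub, pbFourier_fourierPart]
  split_ifs <;> simp_all

theorem card_filter_le_abs_mul_le {α : Type*} (A : Finset α) (a : α → ℝ) (θ : ℝ) :
    #{S ∈ A | θ ≤ |a S|} * θ ≤ ∑ S ∈ A, |a S| := by
  rw [← nsmul_eq_mul]
  exact (card_nsmul_le_sum _ _ _ fun S hS => (mem_filter.1 hS).2).trans
    (sum_le_sum_of_subset_of_nonneg (filter_subset _ _) fun _ _ _ => abs_nonneg _)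

theorem sum_filter_abs_lt_sq_le {α : Type*} (A : Finset α) (a : α → ℝ) {θ : ℝ} (hθ : 0 ≤ θ) :
    ∑ S ∈ A with ¬θ ≤ |a S|, a S ^ 2 ≤ θ * ∑ S ∈ A, |a S| := by
  rw [mul_sum]
  refine (sum_le_sum fun S hS => ?_).trans
    (sum_le_sum_of_subset_of_nonneg (filter_subset _ _) fun _ _ _ => by positivity)
  rw [← sq_abs, sq]
  exact mul_le_mul_of_nonneg_right (not_le.1 (mem_filter.1 hS).2).le (abs_nonneg _)

theorem exists_sparse_approximation {f : (Fin n → Bool) → ℝ} {A : Finset (Finset (Fin n))}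
    {L δ θ : ℝ} (hθ : 0 < θ) (hA : ∑ S ∈ A, |pbFourier f S| ≤ L)
    (hAc : ∑ S ∈ Aᶜ, pbFourier f S ^ 2 ≤ δ) :
    ∃ g : (Fin n → Bool) → ℝ, ({S | pbFourier g S ≠ 0}.ncard : ℝ) ≤ L / θ ∧
      (∑ x, (f x - g x) ^ 2) / 2 ^ n ≤ θ * L + δ := by
  set H := {S ∈ A | θ ≤ |pbFourier f S|} with hH
  refine ⟨fourierPart H f, ?_, ?_⟩
  · refine (Nat.cast_le.2 (ncard_pbFourier_fourierPart_ne_zero_le H f)).trans ?_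
    rw [le_div_iff₀ hθ]
    exact (card_filter_le_abs_mul_le A (pbFourier f) θ).trans hA
  · have hcompl : Hᶜ = {S ∈ A | ¬θ ≤ |pbFourier f S|} ∪ Aᶜ := by
      ext S
      by_cases hS : S ∈ A <;> simp [hH, hS]
    rw [sum_sub_fourierPart_sq_div, hcompl,
      sum_union (disjoint_compl_right.mono_left (filter_subset _ A))]
    exact add_le_add ((sum_filter_abs_lt_sq_le A (pbFourier f) hθ.le).trans
      (mul_le_mul_of_nonneg_left hA hθ.le)) hAc

end Fourier

section DNF

variable {ι α : Type*}

theorem forall_mem_union_eq_decide_iff [DecidableEq ι] {A B : Finset ι} (hAB : Disjoint A B)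
    (x : ι → Bool) :
    (∀ i ∈ A ∪ B, x i = decide (i ∈ A)) ↔ (∀ i ∈ A, x i = true) ∧ ∀ j ∈ B, x j = false := by
  rw [forall_mem_union]
  refine and_congr (forall₂_congr fun i hi => ?_) (forall₂_congr fun j hj => ?_)
  · rw [decide_eq_true hi]
  · rw [decide_eq_false (disjoint_right.1 hAB hj)]

theorem sup_insert_ite_of_forall_le [DecidableEq α] {T : Finset α} {t : α} {a : α → ℕ}
    (ht : ∀ u ∈ T, a u ≤ a t) (P : α → Prop) [DecidablePred P] :
    ((insert t T).sup fun u => if P u then a u else 0) =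
      if P t then a t else T.sup fun u => if P u then a u else 0 := by
  rw [sup_insert]
  split_ifs
  · refine sup_eq_left.2 (Finset.sup_le fun u hu => ?_)
    split_ifs
    exacts [ht u hu, Nat.zero_le _]
  · exact bot_sup_eq _

theorem abs_two_div_mul_sub_one_le_one {a r : ℕ} (h : a ≤ r) : |2 / (r : ℝ) * a - 1| ≤ 1 := by
  have hle : (a : ℝ) / r ≤ 1 := div_le_one_of_le₀ (mod_cast h) r.cast_nonneg
  have hnonneg : 0 ≤ (a : ℝ) / r := by positivity
  rw [abs_le, div_mul_eq_mul_div, mul_div_assoc]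
  constructor <;> linarith

/-- Testing the terms in order of decreasing constants computes the maximum. -/
theorem isDecisionList_two_div_mul_sup_sub_one {k r : ℕ} {a : α → ℕ} (ha : ∀ t, a t ≤ r)
    {A B : α → Finset ι} (hAB : ∀ t, #(A t) + #(B t) ≤ k) (T : Finset α) :
    IsDecisionList k fun x => 2 / (r : ℝ) * ((T.sup fun t =>
      if (∀ i ∈ A t, x i = true) ∧ ∀ j ∈ B t, x j = false then a t else 0 : ℕ) : ℝ) - 1 := by
  classical
  induction T using Finset.induction_on_max_value a with
  | empty => simpa using IsDecisionList.const (k := k) (-1) (by simp)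
  | insert t T _ hmax ih =>
    simp only [sup_insert_ite_of_forall_le hmax]
    by_cases hdisj : Disjoint (A t) (B t)
    · simp only [← forall_mem_union_eq_decide_iff hdisj]
      convert IsDecisionList.cons (A t ∪ B t) (fun i => decide (i ∈ A t)) (2 / r * a t - 1) _
        ((card_union_le _ _).trans (hAB t)) (abs_two_div_mul_sub_one_le_one (ha t)) ih using 1
      funext x
      simp only [decisionRule, forall_mem_union_eq_decide_iff hdisj]
      split_ifs <;> rfl
    · obtain ⟨i, hiA, hiB⟩ := not_disjoint_iff.1 hdisj
      have hfalse (x : ι → Bool) : ¬((∀ i ∈ A t, x i = true) ∧ ∀ j ∈ B t, x j = false) :=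
        fun h => by simpa [h.1 i hiA] using h.2 i hiB
      simpa only [hfalse, if_false] using ih

end DNF

theorem IsPBDNF.isDecisionList {n k r : ℕ} {f : (Fin n → Bool) → ℝ} (hf : IsPBDNF k r f) :
    IsDecisionList k f := by
  obtain ⟨m, a, A, B, ha, hAB, hf⟩ := hf
  rw [funext hf]
  convert isDecisionList_two_div_mul_sup_sub_one ha hAB univ

section Parameters

theorem le_one_add_inv_pow_ceil {m y : ℝ} (hm : 1 ≤ m) (hy : 1 ≤ y) :
    y ≤ (1 + m⁻¹) ^ ⌈m * Real.logb 2 y⌉₊ := by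
  have hm0 : 0 < m := by linarith
  have hinv : 0 < m⁻¹ := inv_pos.2 hm0
  have htwo : 2 ≤ (1 + m⁻¹) ^ m := by
    have h := one_add_mul_self_le_rpow_one_add (by linarith : -1 ≤ m⁻¹) hm
    rw [mul_inv_cancel₀ hm0.ne'] at h
    linarith
  calc y = 2 ^ Real.logb 2 y := (Real.rpow_logb two_pos (by norm_num) (by linarith)).symm
    _ ≤ ((1 + m⁻¹) ^ m) ^ Real.logb 2 y :=
        Real.rpow_le_rpow zero_le_two htwo (Real.logb_nonneg one_lt_two hy)
    _ = (1 + m⁻¹) ^ (m * Real.logb 2 y) := (Real.rpow_mul (by linarith) _ _).symm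
    _ ≤ (1 + m⁻¹) ^ (⌈m * Real.logb 2 y⌉₊ : ℝ) :=
        Real.rpow_le_rpow_of_exponent_le (by linarith) (Nat.le_ceil _)
    _ = (1 + m⁻¹) ^ ⌈m * Real.logb 2 y⌉₊ := Real.rpow_natCast _ _

variable {n k : ℕ} {f : (Fin n → Bool) → ℝ}

/-- Hence `C = 5 / 4` is admissible in the spectral bounds for `p = 1 / (28 * k)`: it solves
`C * (6 / 5) = 2 * C - 1`. -/
theorem one_add_four_mul_div_pow_le (hk : k ≠ 0) :
    (1 + 4 * (28 * (k : ℝ))⁻¹ / (1 - (28 * (k : ℝ))⁻¹)) ^ k ≤ 6 / 5 := by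
  have hk1 : (1 : ℝ) ≤ k := mod_cast Nat.one_le_iff_ne_zero.2 hk
  have hfrac : 4 * (28 * (k : ℝ))⁻¹ / (1 - (28 * (k : ℝ))⁻¹) = 4 / (28 * k - 1) := by
    have : 28 * (k : ℝ) - 1 ≠ 0 := by linarith
    field_simp
  have hk0 : 0 < 28 * (k : ℝ) - 1 := by linarith
  calc (1 + 4 * (28 * (k : ℝ))⁻¹ / (1 - (28 * (k : ℝ))⁻¹)) ^ k
      ≤ Real.exp (4 / (28 * k - 1)) ^ k := by
        rw [hfrac, add_comm]
        exact pow_le_pow_left₀ (by positivity) (Real.add_one_le_exp _) k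
    _ = Real.exp (k * (4 / (28 * k - 1))) := (Real.exp_nat_mul _ k).symm
    _ ≤ Real.exp (1 / 6) := by
        refine Real.exp_le_exp.2 ?_
        rw [mul_div_assoc', div_le_div_iff₀ hk0 (by norm_num)]
        linarith
    _ ≤ 6 / 5 :=
        (Real.exp_bound_div_one_sub_of_interval (by norm_num) (by norm_num)).trans (by norm_num)

theorem IsDecisionList.sum_card_le_abs_pbFourier_le (hf : IsDecisionList k f) (hk : k ≠ 0) (τ : ℕ) :
    ∑ S with #S ≤ τ, |pbFourier f S| ≤ 5 / 4 * (28 * k) ^ τ := by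
  have hk1 : (1 : ℝ) ≤ k := mod_cast Nat.one_le_iff_ne_zero.2 hk
  have hp1 : (28 * (k : ℝ))⁻¹ < 1 := inv_lt_one_of_one_lt₀ (by linarith)
  have hweighted : ((28 * (k : ℝ))⁻¹) ^ τ * ∑ S with #S ≤ τ, |pbFourier f S| ≤ 5 / 4 :=
    (pow_mul_sum_card_le_le (by positivity) hp1.le (fun S => abs_nonneg (pbFourier f S)) τ).trans
      (hf.sum_pow_mul_abs_pbFourier_le (by positivity) hp1 (by norm_num)
        (by linarith [one_add_four_mul_div_pow_le hk]))
  rwa [inv_pow, inv_mul_eq_div, div_le_iff₀ (by positivity)] at hweighted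

theorem IsDecisionList.one_add_inv_pow_mul_sum_pbFourier_sq_le (hf : IsDecisionList k f)
    (hk : k ≠ 0) (τ : ℕ) :
    (1 + (28 * (k : ℝ))⁻¹) ^ τ * ∑ S with ¬#S ≤ τ, pbFourier f S ^ 2 ≤ 5 / 4 := by
  have hk1 : (1 : ℝ) ≤ k := mod_cast Nat.one_le_iff_ne_zero.2 hk
  have hp1 : (28 * (k : ℝ))⁻¹ < 1 := inv_lt_one_of_one_lt₀ (by linarith)
  have hp0 : 0 ≤ (28 * (k : ℝ))⁻¹ := by positivity
  exact (pow_mul_sum_lt_card_le (by linarith) (fun S => sq_nonneg (pbFourier f S)) τ).trans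
    (hf.sum_one_add_pow_mul_pbFourier_sq_le hp0 hp1 (by norm_num)
      (by linarith [one_add_four_mul_div_pow_le hk]))

theorem IsDecisionList.exists_sparse_approximation_of_ne_zero (hf : IsDecisionList k f)
    (hk : k ≠ 0) {ε : ℝ} (hε0 : 0 < ε) (hε1 : ε ≤ 1) :
    ∃ g : (Fin n → Bool) → ℝ,
      ({S | pbFourier g S ≠ 0}.ncard : ℝ) ≤
        25 / 4 * (28 * (k : ℝ)) ^ (2 * ⌈28 * (k : ℝ) * Real.logb 2 (2 / ε)⌉₊) / ε ∧
      (∑ x, (f x - g x) ^ 2) / 2 ^ n ≤ ε := by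
  set τ := ⌈28 * (k : ℝ) * Real.logb 2 (2 / ε)⌉₊
  have hk1 : (1 : ℝ) ≤ k := mod_cast Nat.one_le_iff_ne_zero.2 hk
  set L : ℝ := 5 / 4 * (28 * k) ^ τ with hL
  have hL0 : 0 < L := by positivity
  have htail : ∑ S with ¬#S ≤ τ, pbFourier f S ^ 2 ≤ 5 / 8 * ε := by
    have hpow : 2 / ε ≤ (1 + (28 * (k : ℝ))⁻¹) ^ τ :=
      le_one_add_inv_pow_ceil (by linarith) ((one_le_div hε0).2 (by linarith))
    have h := (mul_le_mul_of_nonneg_right hpow (sum_nonneg fun S _ => sq_nonneg _)).trans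
      (hf.one_add_inv_pow_mul_sum_pbFourier_sq_le hk τ)
    rw [div_mul_eq_mul_div, div_le_iff₀ hε0] at h
    linarith
  obtain ⟨g, hcard, herr⟩ := exists_sparse_approximation (θ := ε / (4 * L))
    (δ := 5 / 8 * ε) (by positivity) (hf.sum_card_le_abs_pbFourier_le hk τ) (by rwa [compl_filter])
  refine ⟨g, hcard.trans_eq ?_, herr.trans ?_⟩
  · rw [← hL]
    field_simp
    rw [hL]
    ring
  · rw [← hL, div_mul_eq_mul_div, mul_div_mul_right _ _ hL0.ne']
    linarith

theorem sparsity_bound_le {r : ℕ} (hr : 1 ≤ r) {ε : ℝ} (hε : 0 < ε) :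
    25 / 4 * (28 * (k : ℝ)) ^ (2 * ⌈28 * (k : ℝ) * Real.logb 2 (2 / ε)⌉₊) / ε ≤
      32 * (r : ℝ) ^ 2 *
        (28 * (k : ℝ)) ^ (2 * ⌈28 * (k : ℝ) * Real.logb 2 (2 * r / ε)⌉₊) / ε := by
  have hr1 : (1 : ℝ) ≤ r := mod_cast hr
  have hcoeff : (25 / 4 : ℝ) ≤ 32 * (r : ℝ) ^ 2 := by linarith [one_le_pow₀ hr1 (n := 2)]
  rcases eq_or_ne k 0 with rfl | hk
  · simpa using div_le_div_of_nonneg_right hcoeff hε.le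
  · have hk1 : (1 : ℝ) ≤ k := mod_cast Nat.one_le_iff_ne_zero.2 hk
    have hlog : Real.logb 2 (2 / ε) ≤ Real.logb 2 (2 * r / ε) := by
      refine Real.logb_le_logb_of_le one_lt_two (by positivity) ?_
      gcongr
      linarith
    have hbase : 1 ≤ 28 * (k : ℝ) := by linarith
    gcongr

end Parameters

theorem pbdnf_sparse_approximation_general {n k : ℕ} {ε : ℝ} (hε0 : 0 < ε) (hε1 : ε ≤ 1)
    {f : (Fin n → Bool) → ℝ} (hf : IsDecisionList k f) :
    ∃ g : (Fin n → Bool) → ℝ,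
      ({S | pbFourier g S ≠ 0}.ncard : ℝ) ≤
        25 / 4 * (28 * (k : ℝ)) ^ (2 * ⌈28 * (k : ℝ) * Real.logb 2 (2 / ε)⌉₊) / ε ∧
      (∑ x, (f x - g x) ^ 2) / 2 ^ n ≤ ε := by
  rcases eq_or_ne k 0 with rfl | hk
  · obtain ⟨c, rfl⟩ := hf.exists_eq_const
    refine ⟨fun _ => c, (Nat.cast_le.2 (ncard_pbFourier_const_ne_zero_le_one c)).trans ?_,
      by simpa using hε0.le⟩
    simp only [Nat.cast_zero, Nat.cast_one, mul_zero, zero_mul, Nat.ceil_zero, pow_zero,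
      mul_one]
    rw [le_div_iff₀ hε0]
    linarith
  · exact hf.exists_sparse_approximation_of_ne_zero hk hε0 hε1

/-- every `f ∈ DNF^{k,r}` is `ε`-approximated (in expected square
error under the uniform distribution) by an `M`-sparse function `g` with
`M ≤ 32r²(28k)^{2τ}/ε`, where `τ = ⌈28k·log₂(2r/ε)⌉`. -/
theorem pbdnf_sparse_approximation (n k r : ℕ) (hr : 1 ≤ r)
    (ε : ℝ) (hε0 : 0 < ε) (hε1 : ε ≤ 1)
    (f : (Fin n → Bool) → ℝ) (hf : IsPBDNF k r f) :
    ∃ g : (Fin n → Bool) → ℝ,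
      (((Set.ncard {S : Finset (Fin n) | pbFourier g S ≠ 0}) : ℝ)
        ≤ 32 * (r : ℝ) ^ 2 *
            (28 * (k : ℝ)) ^ (2 * ⌈28 * (k : ℝ) * Real.logb 2 (2 * r / ε)⌉₊) / ε) ∧
      (∑ x : Fin n → Bool, (f x - g x) ^ 2) / 2 ^ n ≤ ε := by
  obtain ⟨g, hcard, herr⟩ := pbdnf_sparse_approximation_general hε0 hε1 hf.isDecisionList
  exact ⟨g, hcard.trans (sparsity_bound_le hr hε0), herr⟩
end

section
/- For every function f ∈ DNF^{k,r} and every 0 < ε ≤ 1, the Fourier weight above level 28k·log₂(2r/ε) is small: ∑_{S ⊆ [n], |S| > 28k·log₂(2r/ε)} f̂(S)² ≤ ε/2. -/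
/-!
The level sets of `F` are unions of width-`k` terms, and `F` is the sum of their indicators, so by
Cauchy–Schwarz over the `r` levels it suffices to treat one indicator `g`.

For a set `J` of coordinates let `D_J g (y) = ∑_{S ⊇ J} ĝ(S) χ_{S \ J}(y)`. Parseval gives
`∑_{S ⊇ J} ĝ(S)² ≤ 𝔼 (D_J g)² ≤ 𝔼 |D_J g|`. Since `D_J g` vanishes whenever `g` is constant on the
subcube spanned by `J`, one may restrict to the first term alive on that subcube and differentiate
in its variables first; iterating bounds `𝔼 |D_J g|` by the probability that `J` splits into blocks
of first satisfied terms along a chain of points, the encoding of Razborov's switching lemma. The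
total weight `∑_J z ^ |J|` of such `J`, averaged over the cube, satisfies
`W ≤ 1 + ((1 + 2z) ^ k - 1) W`. For `z = 1 / (8k)` this yields `∑_S (1 + z) ^ |S| ĝ(S)² ≤ 2`, and
the tail bound follows by Markov's inequality.
-/

namespace PseudoBooleanDNF

open Finset
open scoped BigOperators

section Walsh

variable {ι : Type*}

/-- The Walsh character `χ_S` on the cube, with `true` read as `1` and `false` as `-1`. -/
def walsh (S : Finset ι) (x : ι → Bool) : ℝ :=
  ∏ i ∈ S, if x i then 1 else -1

theorem abs_walsh (S : Finset ι) (x : ι → Bool) : |walsh S x| = 1 := by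
  rw [walsh, abs_prod]
  refine prod_eq_one fun i _ => ?_
  split_ifs <;> simp

theorem walsh_mul_self (S : Finset ι) (x : ι → Bool) : walsh S x * walsh S x = 1 := by
  rw [← abs_mul_abs_self, abs_walsh, one_mul]

theorem dependsOn_walsh (S : Finset ι) : DependsOn (walsh S) (S : Set ι) := fun x y hxy =>
  prod_congr rfl fun i hi => by rw [hxy i hi]

variable [DecidableEq ι]

theorem walsh_mul_walsh_sdiff {K S : Finset ι} (hKS : K ⊆ S) (x : ι → Bool) :
    walsh K x * walsh (S \ K) x = walsh S x := by
  rw [mul_comm, walsh, walsh, prod_sdiff hKS, walsh]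

theorem walsh_piecewise {K S : Finset ι} (hKS : K ⊆ S) (v w : ι → Bool) :
    walsh S (K.piecewise v w) = walsh K v * walsh (S \ K) w := by
  have on_K : walsh K (K.piecewise v w) = walsh K v :=
    dependsOn_walsh K fun i hi => piecewise_eq_of_mem _ _ _ hi
  have off_K : walsh (S \ K) (K.piecewise v w) = walsh (S \ K) w :=
    dependsOn_walsh (S \ K) fun i hi => piecewise_eq_of_notMem _ _ _ (mem_sdiff.mp hi).2
  rw [← walsh_mul_walsh_sdiff hKS, on_K, off_K]

theorem walsh_update_not {S : Finset ι} {a : ι} (ha : a ∈ S) (x : ι → Bool) :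
    walsh S (Function.update x a (!x a)) = -walsh S x := by
  have off_a : ∏ i ∈ S.erase a, (if Function.update x a (!x a) i then (1 : ℝ) else -1) =
      ∏ i ∈ S.erase a, if x i then 1 else -1 :=
    prod_congr rfl fun i hi => by rw [Function.update_of_ne (ne_of_mem_erase hi)]
  rw [walsh, walsh, ← mul_prod_erase _ _ ha, ← mul_prod_erase _ _ ha, off_a, ← neg_mul]
  cases x a <;> simp

variable [Fintype ι]

theorem expect_walsh {S : Finset ι} (hS : S.Nonempty) : 𝔼 x, walsh S x = 0 := by
  obtain ⟨a, ha⟩ := hS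
  have flip_involutive :
      Function.Involutive fun x : ι → Bool => Function.update x a (!x a) := fun x => by simp
  have eq_neg : 𝔼 x, walsh S x = -𝔼 x, walsh S x := by
    rw [← expect_neg_distrib]
    exact Fintype.expect_equiv flip_involutive.toPerm _ _ fun x => by
      simp [walsh_update_not ha]
  linarith

theorem sum_walsh_mul_walsh (x y : ι → Bool) :
    ∑ S, walsh S x * walsh S y = if x = y then (Fintype.card (ι → Bool) : ℝ) else 0 := by
  have sum_eq_prod : ∑ S, walsh S x * walsh S y =
      ∏ i, (1 + (if x i then (1 : ℝ) else -1) * (if y i then 1 else -1)) := by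
    simp only [walsh, ← prod_mul_distrib, prod_one_add, powerset_univ]
  rw [sum_eq_prod]
  split_ifs with hxy
  · have factor_eq_two : ∀ i, 1 + (if x i then (1 : ℝ) else -1) * (if x i then 1 else -1) = 2 :=
      fun i => by split_ifs <;> norm_num
    simp only [← hxy, factor_eq_two, prod_const, card_univ, Fintype.card_fun, Fintype.card_bool,
      Nat.cast_pow, Nat.cast_ofNat]
  · obtain ⟨i, hi⟩ := Function.ne_iff.mp hxy
    refine prod_eq_zero (mem_univ i) ?_
    revert hi
    cases x i <;> cases y i <;> simp

/-- The Fourier coefficient of `f` at `S`, over an arbitrary finite set of coordinates and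
written as an expectation. -/
noncomputable def walshCoeff (f : (ι → Bool) → ℝ) (S : Finset ι) : ℝ :=
  𝔼 x, f x * walsh S x

theorem sum_sq_walshCoeff (f : (ι → Bool) → ℝ) : ∑ S, walshCoeff f S ^ 2 = 𝔼 x, f x ^ 2 :=
  calc ∑ S, walshCoeff f S ^ 2
      = ∑ S, 𝔼 x, 𝔼 y, f x * f y * (walsh S x * walsh S y) := by
        refine sum_congr rfl fun S _ => ?_
        rw [sq, walshCoeff, expect_mul_expect]
        simp only [mul_mul_mul_comm]
    _ = 𝔼 x, 𝔼 y, f x * f y * ∑ S, walsh S x * walsh S y := by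
        simp only [← expect_sum_comm, mul_sum]
    _ = 𝔼 x, f x ^ 2 := by
        refine expect_congr rfl fun x _ => ?_
        simp_rw [sum_walsh_mul_walsh, mul_comm _ (ite _ _ _), expect_boole_mul, sq]

theorem walshCoeff_affine_sum {κ : Type*} {S : Finset ι} (hS : S.Nonempty) (s : Finset κ)
    (g : κ → (ι → Bool) → ℝ) (a b : ℝ) :
    walshCoeff (fun x => a * ∑ c ∈ s, g c x + b) S = a * ∑ c ∈ s, walshCoeff (g c) S := by
  simp only [walshCoeff, add_mul, expect_add_distrib, ← mul_expect, expect_walsh hS, mul_zero,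
    add_zero, mul_assoc, sum_mul, expect_sum_comm]

theorem sum_sq_walshCoeff_affine_sum_le {κ : Type*} {P : Finset (Finset ι)}
    (hP : ∀ S ∈ P, S.Nonempty) (s : Finset κ) (g : κ → (ι → Bool) → ℝ) (a b : ℝ) {δ : ℝ}
    (hg : ∀ c ∈ s, ∑ S ∈ P, walshCoeff (g c) S ^ 2 ≤ δ) :
    ∑ S ∈ P, walshCoeff (fun x => a * ∑ c ∈ s, g c x + b) S ^ 2 ≤ (a * #s) ^ 2 * δ :=
  calc ∑ S ∈ P, walshCoeff (fun x => a * ∑ c ∈ s, g c x + b) S ^ 2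
      ≤ ∑ S ∈ P, a ^ 2 * (#s * ∑ c ∈ s, walshCoeff (g c) S ^ 2) := by
        refine sum_le_sum fun S hS => ?_
        rw [walshCoeff_affine_sum (hP S hS), mul_pow]
        exact mul_le_mul_of_nonneg_left sq_sum_le_card_mul_sum_sq (sq_nonneg a)
    _ = a ^ 2 * (#s * ∑ c ∈ s, ∑ S ∈ P, walshCoeff (g c) S ^ 2) := by
        rw [← mul_sum, ← mul_sum, sum_comm]
    _ ≤ a ^ 2 * (#s * ∑ _c ∈ s, δ) := by gcongr with c hc; exact hg c hc
    _ = (a * #s) ^ 2 * δ := by rw [sum_const, nsmul_eq_mul]; ring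

theorem mul_sum_sq_walshCoeff_le {P : Finset (Finset ι)} {M b : ℝ} (hb : 0 ≤ b)
    (hP : ∀ S ∈ P, M ≤ b ^ #S) (f : (ι → Bool) → ℝ) :
    M * ∑ S ∈ P, walshCoeff f S ^ 2 ≤ ∑ S, b ^ #S * walshCoeff f S ^ 2 := by
  rw [mul_sum]
  exact (sum_le_sum fun S hS => mul_le_mul_of_nonneg_right (hP S hS) (sq_nonneg _)).trans
    (sum_le_univ_sum_of_nonneg fun S => by positivity)

end Walsh

section Resampling

variable {ι α : Type*} [DecidableEq ι]

theorem piecewise_piecewise_eq_sdiff {K J : Finset ι} (hKJ : K ⊆ J) (v w y : ι → α) :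
    J.piecewise (K.piecewise v w) y = (J \ K).piecewise w (K.piecewise v y) := by
  ext i
  by_cases hK : i ∈ K
  · simp [hK, hKJ hK]
  · by_cases hJ : i ∈ J <;> simp [hK, hJ]

variable [Fintype ι] [Fintype α]

theorem expect_expect_piecewise [Nonempty α] (K : Finset ι) (F : (ι → α) → ℝ) :
    𝔼 v, 𝔼 w, F (K.piecewise v w) = 𝔼 w, F w := by
  have swap_involutive : Function.Involutive fun p : (ι → α) × (ι → α) =>
      (K.piecewise p.1 p.2, K.piecewise p.2 p.1) := by
    rintro ⟨v, w⟩
    ext i <;> by_cases hi : i ∈ K <;> simp [hi]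
  calc 𝔼 v, 𝔼 w, F (K.piecewise v w)
      = 𝔼 p : (ι → α) × (ι → α), F (K.piecewise p.1 p.2) := by
        rw [← univ_product_univ, expect_product]
    _ = 𝔼 p : (ι → α) × (ι → α), F p.1 :=
        Fintype.expect_equiv swap_involutive.toPerm _ _ fun p => rfl
    _ = 𝔼 w, F w := by
        rw [← univ_product_univ, expect_product]
        simp only [Fintype.expect_const]

theorem card_filter_eq_off [DecidableEq α] (K : Finset ι) (x : ι → α) :
    #{y : ι → α | ∀ i ∉ K, x i = y i} = Fintype.card α ^ #K := by
  have eq_piFinset : ({y : ι → α | ∀ i ∉ K, x i = y i} : Finset (ι → α)) =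
      Fintype.piFinset fun i => if i ∈ K then univ else {x i} := by
    ext y
    simp only [mem_filter_univ, Fintype.mem_piFinset]
    refine forall_congr' fun i => ?_
    by_cases hi : i ∈ K <;> simp [hi, eq_comm]
  rw [eq_piFinset, Fintype.card_piFinset]
  simp [apply_ite Finset.card]

theorem expect_sum_eq_off [DecidableEq α] (K : Finset ι) (g : (ι → α) → ℝ) :
    𝔼 y : ι → α, ∑ y' with ∀ i ∉ K, y' i = y i, g y' = Fintype.card α ^ #K * 𝔼 y, g y := by
  simp only [Fintype.expect_eq_sum_div_card, sum_filter]
  rw [sum_comm, ← mul_div_assoc, mul_sum]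
  simp only [← sum_filter, sum_const, card_filter_eq_off, nsmul_eq_mul, Nat.cast_pow]

end Resampling

section SubsetSums

variable {ι R : Type*} [CommSemiring R]

theorem sum_powerset_pow_card (S : Finset ι) (z : R) :
    ∑ J ∈ S.powerset, z ^ #J = (1 + z) ^ #S := by
  rw [add_comm, ← sum_pow_mul_eq_add_pow]
  simp only [one_pow, mul_one]

theorem sum_one_add_pow_card_mul [DecidableEq ι] [Fintype ι] (z : R) (g : Finset ι → R) :
    ∑ S, (1 + z) ^ #S * g S = ∑ J, z ^ #J * ∑ S with J ⊆ S, g S := by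
  simp only [← sum_powerset_pow_card, sum_mul, mul_sum]
  exact sum_comm' fun S J => by simp

end SubsetSums

section CubeDeriv

variable {ι : Type*} [DecidableEq ι] [Fintype ι]

/-- The iterated discrete derivative of `f` in the directions `J` at `y`, that is
`∑_{S ⊇ J} f̂(S) χ_{S \ J}(y)`, written as an average over resamplings of the coordinates in `J`. -/
noncomputable def cubeDeriv (f : (ι → Bool) → ℝ) (J : Finset ι) (y : ι → Bool) : ℝ :=
  𝔼 w, f (J.piecewise w y) * walsh J w

theorem abs_indicator_one_le_one {α : Type*} (s : Set α) (x : α) :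
    |s.indicator (1 : α → ℝ) x| ≤ 1 := by
  by_cases hx : x ∈ s <;> simp [hx]

theorem abs_cubeDeriv_le_one {f : (ι → Bool) → ℝ} (hf : ∀ x, |f x| ≤ 1) (J : Finset ι)
    (y : ι → Bool) : |cubeDeriv f J y| ≤ 1 := by
  refine (abs_expect_le _ _).trans (expect_le univ_nonempty fun w _ => ?_)
  rw [abs_mul, abs_walsh, mul_one]
  exact hf _

theorem cubeDeriv_eq_zero_of_forall_eq {f : (ι → Bool) → ℝ} {J : Finset ι} (hJ : J.Nonempty)
    {y : ι → Bool} {c : ℝ} (hf : ∀ w, f (J.piecewise w y) = c) : cubeDeriv f J y = 0 := by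
  simp only [cubeDeriv, hf, ← mul_expect, expect_walsh hJ, mul_zero]

theorem cubeDeriv_eq_expect_cubeDeriv_sdiff (f : (ι → Bool) → ℝ) {K J : Finset ι} (hKJ : K ⊆ J)
    (y : ι → Bool) :
    cubeDeriv f J y = 𝔼 v, walsh K v * cubeDeriv f (J \ K) (K.piecewise v y) := by
  rw [cubeDeriv, ← expect_expect_piecewise K]
  refine expect_congr rfl fun v _ => ?_
  rw [cubeDeriv, mul_expect]
  refine expect_congr rfl fun w _ => ?_
  rw [piecewise_piecewise_eq_sdiff hKJ, walsh_piecewise hKJ]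
  ring

theorem cubeDeriv_indicator_eq_zero {C D : Set (ι → Bool)} (hCD : C ⊆ D) {W J : Finset ι}
    (hC : DependsOn (· ∈ C) (W : Set ι)) (hJ : J.Nonempty) (hJW : Disjoint J W) {y : ι → Bool}
    (hy : ∃ w, J.piecewise w y ∈ C) : cubeDeriv (D.indicator 1) J y = 0 := by
  obtain ⟨w₀, hw₀⟩ := hy
  refine cubeDeriv_eq_zero_of_forall_eq (c := 1) hJ fun w => ?_
  have mem_C : J.piecewise w y ∈ C := (hC fun i hi => by
    have hiJ : i ∉ J := disjoint_right.mp hJW hi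
    simp only [piecewise_eq_of_notMem _ _ _ hiJ]).mp hw₀
  exact Set.indicator_of_mem (hCD mem_C) _

theorem abs_cubeDeriv_le_expect_of_sdiff {f F : (ι → Bool) → ℝ} {K J : Finset ι} (hKJ : K ⊆ J)
    {y : ι → Bool} (h : ∀ v, |cubeDeriv f (J \ K) (K.piecewise v y)| ≤
      𝔼 w, F ((J \ K).piecewise w (K.piecewise v y))) :
    |cubeDeriv f J y| ≤ 𝔼 w, F (J.piecewise w y) :=
  calc |cubeDeriv f J y|
      ≤ 𝔼 v, |walsh K v * cubeDeriv f (J \ K) (K.piecewise v y)| := by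
        rw [cubeDeriv_eq_expect_cubeDeriv_sdiff f hKJ]
        exact abs_expect_le _ _
    _ ≤ 𝔼 v, 𝔼 w, F ((J \ K).piecewise w (K.piecewise v y)) :=
        expect_le_expect fun v _ => by
          rw [abs_mul, abs_walsh, one_mul]
          exact h v
    _ = 𝔼 w, F (J.piecewise w y) := by
        simp only [← piecewise_piecewise_eq_sdiff hKJ]
        exact expect_expect_piecewise K fun w => F (J.piecewise w y)

theorem walshCoeff_cubeDeriv_mul_walsh (f : (ι → Bool) → ℝ) {J S : Finset ι} (hJS : J ⊆ S) :
    walshCoeff (fun y => cubeDeriv f J y * walsh J y) S = walshCoeff f S := by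
  rw [walshCoeff, walshCoeff, ← expect_expect_piecewise J fun x => f x * walsh S x, expect_comm]
  refine expect_congr rfl fun y _ => ?_
  simp only [cubeDeriv, expect_mul]
  refine expect_congr rfl fun w _ => ?_
  rw [walsh_piecewise hJS, ← walsh_mul_walsh_sdiff hJS y]
  linear_combination
    f (J.piecewise w y) * walsh J w * walsh (S \ J) y * walsh_mul_self J y

theorem sum_superset_sq_walshCoeff_le (f : (ι → Bool) → ℝ) (J : Finset ι) :
    ∑ S with J ⊆ S, walshCoeff f S ^ 2 ≤ 𝔼 y, cubeDeriv f J y ^ 2 :=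
  calc ∑ S with J ⊆ S, walshCoeff f S ^ 2
      = ∑ S with J ⊆ S, walshCoeff (fun y => cubeDeriv f J y * walsh J y) S ^ 2 :=
        sum_congr rfl fun S hS => by
          rw [walshCoeff_cubeDeriv_mul_walsh f (mem_filter_univ S |>.mp hS)]
    _ ≤ ∑ S, walshCoeff (fun y => cubeDeriv f J y * walsh J y) S ^ 2 :=
        sum_le_univ_sum_of_nonneg fun S => sq_nonneg _
    _ = 𝔼 y, cubeDeriv f J y ^ 2 := by
        simp only [sum_sq_walshCoeff, mul_pow, sq (walsh _ _), walsh_mul_self, mul_one]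

theorem sum_superset_sq_walshCoeff_le_expect_abs {f : (ι → Bool) → ℝ} (hf : ∀ x, |f x| ≤ 1)
    (J : Finset ι) : ∑ S with J ⊆ S, walshCoeff f S ^ 2 ≤ 𝔼 y, |cubeDeriv f J y| := by
  refine (sum_superset_sq_walshCoeff_le f J).trans (expect_le_expect fun y _ => ?_)
  rw [← sq_abs]
  exact pow_le_of_le_one (abs_nonneg _) (abs_cubeDeriv_le_one hf J y) two_ne_zero

end CubeDeriv

section Peeling

variable {ι τ : Type*} [LinearOrder τ]

/-- `K` is a nonempty set of variables of the first term satisfied by `y`, where the `t`-th term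
is satisfied on `T t` and has variables `V t`. -/
def IsFirstTermBlock (T : τ → Set (ι → Bool)) (V : τ → Finset ι) (y : ι → Bool)
    (K : Finset ι) : Prop :=
  K.Nonempty ∧ ∃ t, IsLeast {t | y ∈ T t} t ∧ K ⊆ V t

variable {T : τ → Set (ι → Bool)} {V : τ → Finset ι}

open Classical in
theorem sum_firstTermBlock_pow_card_le [Fintype ι] {k : ℕ} (hV : ∀ t, #(V t) ≤ k) {z : ℝ}
    (hz : 0 ≤ z) (y : ι → Bool) :
    ∑ K with IsFirstTermBlock T V y K, z ^ #K ≤ (1 + z) ^ k - 1 := by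
  by_cases sat : ∃ t, IsLeast {t | y ∈ T t} t
  · obtain ⟨t, ht⟩ := sat
    have blocks_subset : ({K | IsFirstTermBlock T V y K} : Finset (Finset ι)) ⊆
        (V t).powerset.erase ∅ := fun K hK => by
      obtain ⟨hne, s, hs, hKs⟩ := mem_filter_univ K |>.mp hK
      exact mem_erase.mpr ⟨hne.ne_empty, mem_powerset.mpr (ht.unique hs ▸ hKs)⟩
    calc ∑ K with IsFirstTermBlock T V y K, z ^ #K
        ≤ ∑ K ∈ (V t).powerset.erase ∅, z ^ #K :=
          sum_le_sum_of_subset_of_nonneg blocks_subset fun K _ _ => by positivity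
      _ = (1 + z) ^ #(V t) - 1 := by
          rw [sum_erase_eq_sub (empty_mem_powerset _), sum_powerset_pow_card, card_empty, pow_zero]
      _ ≤ (1 + z) ^ k - 1 := by gcongr; exacts [by linarith, hV t]
  · have no_block : ∀ K, ¬IsFirstTermBlock T V y K := fun K ⟨_, t, ht, _⟩ => sat ⟨t, ht⟩
    simpa [no_block] using one_le_pow₀ (by linarith : 1 ≤ 1 + z)

variable [DecidableEq ι]

/-- `J` can be exhausted from `y` by repeatedly rewriting the current point on a set `K` so that
`K` becomes a block of its first satisfied term, and then removing `K` from `J`. This is the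
encoding of Razborov's proof of the switching lemma, phrased as a relation: `y` and `J` are
recovered from the last point together with the blocks and their old values. -/
inductive Peels (T : τ → Set (ι → Bool)) (V : τ → Finset ι) :
    (ι → Bool) → Finset ι → Prop
  | nil (y : ι → Bool) : Peels T V y ∅
  | cons {y y' : ι → Bool} {J K : Finset ι} (hK : IsFirstTermBlock T V y' K) (hKJ : K ⊆ J)
      (hy : ∀ i ∉ K, y' i = y i) (h : Peels T V y' (J \ K)) : Peels T V y J

-- Peeling proceeds in the order opposite to the one in which blocks are found: the block of the
-- first live term `t` is removed last, after all rewriting outside `V t`.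
theorem Peels.of_sdiff {t : τ} (hT : DependsOn (· ∈ T t) (V t : Set ι)) {y : ι → Bool}
    {J : Finset ι} (h : Peels T V y (J \ V t)) (hJt : (J ∩ V t).Nonempty)
    (ht : IsLeast {t | ∃ w, J.piecewise w y ∈ T t} t) : Peels T V y J := by
  generalize hJ' : J \ V t = J' at h
  induction h generalizing J with
  | nil y =>
    obtain ⟨w, hw⟩ := ht.1
    refine .cons ⟨hJt.mono inter_subset_left, t, ⟨hw, fun s hs => ht.2 ⟨w, hs⟩⟩,
      sdiff_eq_empty_iff_subset.mp hJ'⟩ Subset.rfl (fun i hi => piecewise_eq_of_notMem _ _ _ hi) ?_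
    rw [sdiff_self]
    exact .nil _
  | @cons y y' J' K hK hKJ' hy _ ih =>
    subst hJ'
    have hKJ : K ⊆ J := hKJ'.trans sdiff_subset
    have notMem_K : ∀ i ∈ V t, i ∉ K := fun i hi hiK => (mem_sdiff.mp (hKJ' hiK)).2 hi
    have subcube_subset (w : ι → Bool) :
        (J \ K).piecewise w y' = J.piecewise (K.piecewise y' w) y := by
      rw [piecewise_piecewise_eq_sdiff hKJ]
      congr 1
      ext i
      by_cases hi : i ∈ K <;> simp [hi, hy]
    refine .cons hK hKJ hy (ih ?_ ⟨?_, ?_⟩ (sdiff_right_comm _ _ _))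
    · obtain ⟨i, hi⟩ := hJt
      rw [mem_inter] at hi
      exact ⟨i, mem_inter.mpr ⟨mem_sdiff.mpr ⟨hi.1, notMem_K i hi.2⟩, hi.2⟩⟩
    · obtain ⟨w, hw⟩ := ht.1
      refine ⟨w, (hT fun i hi => ?_).mp hw⟩
      have hiK := notMem_K i hi
      rw [subcube_subset]
      by_cases hiJ : i ∈ J <;> simp [hiJ, hiK]
    · rintro s ⟨w, hw⟩
      exact ht.2 ⟨K.piecewise y' w, subcube_subset w ▸ hw⟩

variable [Fintype ι]

theorem abs_cubeDeriv_iUnion_le [WellFoundedLT τ] (hT : ∀ t, DependsOn (· ∈ T t) (V t : Set ι))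
    (J : Finset ι) (y : ι → Bool) :
    |cubeDeriv ((⋃ t, T t).indicator 1) J y| ≤
      𝔼 w, {x | Peels T V x J}.indicator 1 (J.piecewise w y) := by
  induction J using Finset.strongInduction generalizing y with
  | H J ih =>
  have rhs_nonneg : (0 : ℝ) ≤ 𝔼 w, {x | Peels T V x J}.indicator 1 (J.piecewise w y) :=
    expect_nonneg fun w _ => Set.indicator_nonneg (fun _ _ => zero_le_one) _
  rcases J.eq_empty_or_nonempty with rfl | hJ
  · refine (abs_cubeDeriv_le_one (abs_indicator_one_le_one _) _ _).trans ?_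
    simp [Peels.nil]
  rcases {t | ∃ w, J.piecewise w y ∈ T t}.eq_empty_or_nonempty with no_live | live
  · have all_false : ∀ w, (⋃ t, T t).indicator (1 : (ι → Bool) → ℝ) (J.piecewise w y) = 0 :=
      fun w => Set.indicator_of_notMem (fun hw => by
        obtain ⟨t, ht⟩ := Set.mem_iUnion.mp hw
        exact Set.eq_empty_iff_forall_notMem.mp no_live t ⟨w, ht⟩) _
    rwa [cubeDeriv_eq_zero_of_forall_eq hJ all_false, abs_zero]
  obtain ⟨t, ht⟩ : ∃ t, IsLeast {t | ∃ w, J.piecewise w y ∈ T t} t :=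
    ⟨_, WellFounded.min_mem wellFounded_lt _ live, fun s hs => WellFounded.min_le wellFounded_lt hs⟩
  rcases (J ∩ V t).eq_empty_or_nonempty with untouched | hJt
  · rwa [cubeDeriv_indicator_eq_zero (Set.subset_iUnion T t) (hT t) hJ
      (disjoint_iff_inter_eq_empty.mpr untouched) ht.1, abs_zero]
  refine (abs_cubeDeriv_le_expect_of_sdiff inter_subset_left fun v =>
    ih _ (sdiff_ssubset inter_subset_left hJt) _).trans (expect_le_expect fun w _ => ?_)
  have peels_of_sdiff (h : Peels T V (J.piecewise w y) (J \ (J ∩ V t))) :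
      Peels T V (J.piecewise w y) J := by
    rw [sdiff_inter_self_left] at h
    refine h.of_sdiff (hT t) hJt ?_
    simpa only [piecewise_idem_right] using ht
  exact Set.indicator_apply_le'
    (fun h => (Set.indicator_of_mem (s := {x | Peels T V x J}) (peels_of_sdiff h) _).ge)
    fun _ => Set.indicator_nonneg (fun _ _ => zero_le_one) _

open Classical in
/-- The weight `∑ z ^ |J|` of all sets `J` that can be peeled from `y`. -/
noncomputable def peelWeight (T : τ → Set (ι → Bool)) (V : τ → Finset ι) (z : ℝ)
    (y : ι → Bool) : ℝ :=
  ∑ J with Peels T V y J, z ^ #J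

theorem sum_one_add_pow_mul_sq_walshCoeff_le [WellFoundedLT τ]
    (hT : ∀ t, DependsOn (· ∈ T t) (V t : Set ι)) {z : ℝ} (hz : 0 ≤ z) :
    ∑ S, (1 + z) ^ #S * walshCoeff ((⋃ t, T t).indicator 1) S ^ 2 ≤ 𝔼 y, peelWeight T V z y :=
  calc ∑ S, (1 + z) ^ #S * walshCoeff ((⋃ t, T t).indicator 1) S ^ 2
      = ∑ J, z ^ #J * ∑ S with J ⊆ S, walshCoeff ((⋃ t, T t).indicator 1) S ^ 2 :=
        sum_one_add_pow_card_mul _ _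
    _ ≤ ∑ J, z ^ #J * 𝔼 y, |cubeDeriv ((⋃ t, T t).indicator 1) J y| := by
        gcongr with J
        exact sum_superset_sq_walshCoeff_le_expect_abs (abs_indicator_one_le_one _) J
    _ ≤ ∑ J, z ^ #J * 𝔼 y, 𝔼 w, {x | Peels T V x J}.indicator 1 (J.piecewise w y) := by
        gcongr with J _ y
        exact abs_cubeDeriv_iUnion_le hT J y
    _ = ∑ J, z ^ #J * 𝔼 y, {x | Peels T V x J}.indicator 1 y := by
        refine sum_congr rfl fun J _ => ?_
        rw [expect_comm, expect_expect_piecewise]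
    _ = 𝔼 y, peelWeight T V z y := by
        classical
        simp only [mul_expect, ← expect_sum_comm, peelWeight, sum_filter]
        simp [Set.indicator_apply]

open Classical in
theorem peelWeight_le {z : ℝ} (hz : 0 ≤ z) (y : ι → Bool) :
    peelWeight T V z y ≤ 1 + ∑ K, ∑ y' with ∀ i ∉ K, y' i = y i,
      if IsFirstTermBlock T V y' K then z ^ #K * peelWeight T V z y' else 0 := by
  have exists_code : ∀ J ∈ ({J | Peels T V y J} : Finset (Finset ι)).erase ∅, ∃ y' K,
      IsFirstTermBlock T V y' K ∧ K ⊆ J ∧ (∀ i ∉ K, y' i = y i) ∧ Peels T V y' (J \ K) := by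
    simp only [mem_erase, mem_filter_univ]
    rintro J ⟨hJ, hyJ⟩
    cases hyJ with
    | nil => exact absurd rfl hJ
    | cons hK hKJ hy h => exact ⟨_, _, hK, hKJ, hy, h⟩
  choose! point block hblock hsub hpoint hpeel using exists_code
  let code (J : Finset ι) : Σ _ : Finset ι, Σ _ : ι → Bool, Finset ι :=
    ⟨block J, point J, J \ block J⟩
  have code_injOn : Set.InjOn code (({J | Peels T V y J} : Finset (Finset ι)).erase ∅) := by
    intro J hJ J' hJ' h
    simp only [code, Sigma.mk.injEq, heq_eq_eq] at h
    rw [← sdiff_union_of_subset (hsub J hJ), h.2.2, h.1, sdiff_union_of_subset (hsub J' hJ')]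
  have erase_le : ∑ J ∈ ({J | Peels T V y J} : Finset (Finset ι)).erase ∅, z ^ #J ≤
      ∑ K, ∑ y' with (∀ i ∉ K, y' i = y i) ∧ IsFirstTermBlock T V y' K,
        ∑ J' with Peels T V y' J', z ^ #K * z ^ #J' := by
    simp only [sum_sigma']
    rw [sum_congr rfl fun J hJ => show z ^ #J = z ^ #(code J).1 * z ^ #(code J).2.2 by
        rw [← pow_add, add_comm, card_sdiff_add_card_eq_card (hsub J hJ)],
      ← sum_image (g := code) (f := fun c => z ^ #c.1 * z ^ #c.2.2) code_injOn]
    refine sum_le_sum_of_subset_of_nonneg (image_subset_iff.mpr fun J hJ => ?_)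
      fun c _ _ => by positivity
    simp only [mem_sigma, mem_univ, mem_filter_univ, true_and]
    exact ⟨⟨hpoint J hJ, hblock J hJ⟩, hpeel J hJ⟩
  rw [peelWeight, ← add_sum_erase _ _ (by simpa using Peels.nil y : ∅ ∈ _), card_empty, pow_zero]
  simpa only [← sum_filter, filter_filter, peelWeight, mul_sum] using add_le_add_right erase_le 1

theorem peelWeight_nonneg {z : ℝ} (hz : 0 ≤ z) (y : ι → Bool) : 0 ≤ peelWeight T V z y :=
  sum_nonneg fun J _ => by positivity

-- Each triple `(y', K, J')` codes at most `2 ^ |K|` pairs `(y, J)`, so the weight bounds itself.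
open Classical in
theorem expect_peelWeight_le {k : ℕ} (hV : ∀ t, #(V t) ≤ k) {z : ℝ} (hz : 0 ≤ z) :
    𝔼 y, peelWeight T V z y ≤ 1 + ((1 + 2 * z) ^ k - 1) * 𝔼 y, peelWeight T V z y :=
  calc 𝔼 y, peelWeight T V z y
      ≤ 𝔼 y : ι → Bool, (1 + ∑ K, ∑ y' with ∀ i ∉ K, y' i = y i,
          if IsFirstTermBlock T V y' K then z ^ #K * peelWeight T V z y' else 0) :=
        expect_le_expect fun y _ => peelWeight_le hz y
    _ = 1 + ∑ K, 2 ^ #K * 𝔼 y,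
          if IsFirstTermBlock T V y K then z ^ #K * peelWeight T V z y else 0 := by
        rw [expect_add_distrib, Fintype.expect_const, expect_sum_comm]
        simp only [expect_sum_eq_off, Fintype.card_bool, Nat.cast_ofNat]
    _ = 1 + 𝔼 y, (∑ K with IsFirstTermBlock T V y K, (2 * z) ^ #K) * peelWeight T V z y := by
        simp only [mul_expect, ← expect_sum_comm, mul_ite, mul_zero, ← sum_filter, sum_mul,
          mul_pow, mul_assoc]
    _ ≤ 1 + 𝔼 y, ((1 + 2 * z) ^ k - 1) * peelWeight T V z y := by
        gcongr with y
        · exact peelWeight_nonneg hz y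
        · exact sum_firstTermBlock_pow_card_le hV (by positivity) y
    _ = 1 + ((1 + 2 * z) ^ k - 1) * 𝔼 y, peelWeight T V z y := by rw [mul_expect]

theorem sum_one_add_pow_mul_sq_walshCoeff_le_two [WellFoundedLT τ]
    (hT : ∀ t, DependsOn (· ∈ T t) (V t : Set ι)) {k : ℕ} (hV : ∀ t, #(V t) ≤ k) {z : ℝ}
    (hz : 0 ≤ z) (hzk : (1 + 2 * z) ^ k ≤ 3 / 2) :
    ∑ S, (1 + z) ^ #S * walshCoeff ((⋃ t, T t).indicator 1) S ^ 2 ≤ 2 := by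
  refine (sum_one_add_pow_mul_sq_walshCoeff_le hT hz).trans ?_
  have weight_nonneg : 0 ≤ 𝔼 y, peelWeight T V z y :=
    expect_nonneg fun y _ => peelWeight_nonneg hz y
  have self_bound := expect_peelWeight_le (T := T) hV hz
  nlinarith

end Peeling

section LevelSets

variable {ι : Type*}

/-- The subcube on which the term with positive literals `A` and negative literals `B` is
satisfied. -/
def termCube (A B : Finset ι) : Set (ι → Bool) :=
  {x | (∀ i ∈ A, x i = true) ∧ ∀ j ∈ B, x j = false}

theorem dependsOn_mem_termCube [DecidableEq ι] (A B : Finset ι) :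
    DependsOn (· ∈ termCube A B) ((A ∪ B : Finset ι) : Set ι) := fun x y hxy => by
  have on_A : ∀ i ∈ A, x i = y i := fun i hi => hxy i (mem_union_left B hi)
  have on_B : ∀ j ∈ B, x j = y j := fun j hj => hxy j (mem_union_right A hj)
  simp +contextual only [termCube, Set.mem_ofPred_eq, on_A, on_B]

theorem natCast_eq_sum_indicator {α : Type*} {F : α → ℕ} {r : ℕ} {x : α} (hF : F x ≤ r) :
    (F x : ℝ) = ∑ c ∈ Icc 1 r, {y | c ≤ F y}.indicator 1 x := by
  have levels_eq : {c ∈ Icc 1 r | c ≤ F x} = Icc 1 (F x) := by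
    ext c
    simp only [mem_filter, mem_Icc]
    omega
  simp only [Set.indicator_apply, Set.mem_ofPred_eq, Pi.one_apply, sum_boole, levels_eq,
    Nat.card_Icc, Nat.add_sub_cancel]

theorem setOf_le_sup_ite {α τ : Type*} [Fintype τ] (a : τ → ℕ) (p : τ → α → Prop)
    [∀ t x, Decidable (p t x)] {c : ℕ} (hc : 0 < c) :
    {x | c ≤ univ.sup fun t => if p t x then a t else 0} =
      ⋃ t : {t // c ≤ a t}, {x | p t x} := by
  ext x
  simp only [Set.mem_ofPred_eq, Finset.le_sup_iff (bot_lt_iff_ne_bot.mpr hc.ne'), mem_univ,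
    true_and, Set.mem_iUnion, Subtype.exists, exists_prop]
  refine exists_congr fun t => ?_
  by_cases hp : p t x <;> simp [hp, hc.ne']

theorem natCast_sup_ite_eq_sum_indicator {α τ : Type*} [Fintype τ] {a : τ → ℕ} {r : ℕ}
    (ha : ∀ t, a t ≤ r) (p : τ → α → Prop) [∀ t x, Decidable (p t x)] (x : α) :
    ((univ.sup fun t => if p t x then a t else 0 : ℕ) : ℝ) =
      ∑ c ∈ Icc 1 r, (⋃ t : {t // c ≤ a t}, {x | p t x}).indicator 1 x := by
  have sup_le : (univ.sup fun t => if p t x then a t else 0) ≤ r :=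
    Finset.sup_le fun t _ => by split_ifs; exacts [ha t, Nat.zero_le r]
  rw [natCast_eq_sum_indicator (F := fun x => univ.sup fun t => if p t x then a t else 0) sup_le]
  exact sum_congr rfl fun c hc => by rw [setOf_le_sup_ite a p (mem_Icc.mp hc).1]

theorem exists_eq_sum_levelSets {n k r : ℕ} {f : (Fin n → Bool) → ℝ} (hf : IsPBDNF k r f) :
    ∃ (m : ℕ) (a : Fin m → ℕ) (A B : Fin m → Finset (Fin n)), (∀ t, #(A t) + #(B t) ≤ k) ∧
      f = fun x => 2 / (r : ℝ) * ∑ c ∈ Icc 1 r,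
        (⋃ t : {t // c ≤ a t}, termCube (A t) (B t)).indicator 1 x + -1 := by
  obtain ⟨m, a, A, B, ha, hAB, hf⟩ := hf
  refine ⟨m, a, A, B, hAB, funext fun x => ?_⟩
  rw [hf, sub_eq_add_neg, natCast_sup_ite_eq_sum_indicator ha
    fun t (x : Fin n → Bool) => (∀ i ∈ A t, x i = true) ∧ ∀ j ∈ B t, x j = false]
  rfl

theorem pbFourier_eq_walshCoeff {n : ℕ} (f : (Fin n → Bool) → ℝ) (S : Finset (Fin n)) :
    pbFourier f S = walshCoeff f S := by
  simp [pbFourier, walshCoeff, walsh, Fintype.expect_eq_sum_div_card]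

end LevelSets

section TailBound

theorem one_add_inv_four_mul_pow_le (k : ℕ) : (1 + 1 / (4 * k : ℝ)) ^ k ≤ 3 / 2 :=
  calc (1 + 1 / (4 * k : ℝ)) ^ k
      ≤ Real.exp (1 / (4 * k)) ^ k := by
        gcongr
        rw [add_comm]
        exact Real.add_one_le_exp _
    _ = Real.exp (k * (1 / (4 * k))) := (Real.exp_nat_mul _ k).symm
    _ ≤ Real.exp (1 / 4) := by
        gcongr
        rcases eq_or_ne (k : ℝ) 0 with hk | hk
        · simp [hk]
        · exact le_of_eq (by field_simp)
    _ ≤ 3 / 2 := by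
        refine (Real.exp_bound_div_one_sub_of_interval (by norm_num) (by norm_num)).trans ?_
        norm_num

theorem sixteen_le_one_add_inv_eight_mul_pow {k : ℕ} (hk : k ≠ 0) :
    (16 : ℝ) ≤ (1 + 1 / (8 * k)) ^ (28 * k) :=
  calc (16 : ℝ) ≤ (1 + 1 / 8) ^ 28 := by norm_num
    _ = (1 + k * (1 / (8 * k))) ^ 28 := by field_simp
    _ ≤ ((1 + 1 / (8 * k)) ^ k) ^ 28 := by
        have neg_two_le : (-2 : ℝ) ≤ 1 / (8 * k) := by
          linarith [show (0 : ℝ) ≤ 1 / (8 * k) by positivity]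
        gcongr
        exact one_add_mul_le_pow neg_two_le k
    _ = (1 + 1 / (8 * k)) ^ (28 * k) := by rw [← pow_mul, mul_comm k]

theorem pow_four_le_pow_of_mul_logb_lt {b u : ℝ} {d s : ℕ} (hb : 1 ≤ b) (hbd : 16 ≤ b ^ d)
    (hu : 1 ≤ u) (hs : d * Real.logb 2 u < s) : u ^ 4 ≤ b ^ s :=
  calc u ^ 4 = (2 ^ Real.logb 2 u) ^ 4 := by
        rw [Real.rpow_logb two_pos (by norm_num) (by linarith)]
    _ = 16 ^ Real.logb 2 u := by
        rw [← Real.rpow_mul_natCast two_pos.le, mul_comm, Real.rpow_mul two_pos.le]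
        norm_num
    _ ≤ (b ^ d) ^ Real.logb 2 u :=
        Real.rpow_le_rpow (by norm_num) hbd (Real.logb_nonneg one_lt_two hu)
    _ = b ^ (d * Real.logb 2 u) := by
        rw [Real.rpow_mul (by linarith), Real.rpow_natCast]
    _ ≤ b ^ (s : ℝ) := Real.rpow_le_rpow_of_exponent_le hb hs.le
    _ = b ^ s := Real.rpow_natCast b s

theorem exists_growth_rate (k : ℕ) {u : ℝ} (hu : 1 ≤ u) :
    ∃ z : ℝ, 0 ≤ z ∧ (1 + 2 * z) ^ k ≤ 3 / 2 ∧
      ∀ s : ℕ, 28 * (k : ℝ) * Real.logb 2 u < s → u ^ 4 ≤ (1 + z) ^ s := by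
  rcases eq_or_ne k 0 with rfl | hk
  · refine ⟨u ^ 4, by positivity, by norm_num, fun s hs => ?_⟩
    have s_ne_zero : s ≠ 0 := by rintro rfl; simp at hs
    exact (le_add_of_nonneg_left zero_le_one).trans
      (le_self_pow₀ (le_add_of_nonneg_right (by positivity)) s_ne_zero)
  · refine ⟨1 / (8 * k), by positivity, ?_, fun s hs => ?_⟩
    · convert one_add_inv_four_mul_pow_le k using 3
      field_simp
      norm_num
    · refine pow_four_le_pow_of_mul_logb_lt (le_add_of_nonneg_right (by positivity))
        (sixteen_le_one_add_inv_eight_mul_pow hk) hu ?_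
      exact_mod_cast hs

theorem sum_sq_walshCoeff_iUnion_termCube_le {ι τ : Type*} [DecidableEq ι] [Fintype ι]
    [LinearOrder τ] [WellFoundedLT τ] {A B : τ → Finset ι} {k : ℕ}
    (hAB : ∀ t, #(A t) + #(B t) ≤ k) {u : ℝ} (hu : 1 ≤ u) {P : Finset (Finset ι)}
    (hP : ∀ S ∈ P, 28 * (k : ℝ) * Real.logb 2 u < #S) :
    ∑ S ∈ P, walshCoeff ((⋃ t, termCube (A t) (B t)).indicator 1) S ^ 2 ≤ 2 / u ^ 4 := by
  obtain ⟨z, hz, hzk, growth⟩ := exists_growth_rate k hu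
  rw [le_div_iff₀' (by positivity)]
  exact (mul_sum_sq_walshCoeff_le (by positivity) (fun S hS => growth _ (hP S hS)) _).trans
    (sum_one_add_pow_mul_sq_walshCoeff_le_two (fun t => dependsOn_mem_termCube (A t) (B t))
      (fun t => (card_union_le _ _).trans (hAB t)) hz hzk)

theorem sum_sq_walshCoeff_le_of_isPBDNF {n k r : ℕ} {f : (Fin n → Bool) → ℝ} (hf : IsPBDNF k r f)
    (hr : r ≠ 0) {u : ℝ} (hu : 1 ≤ u) {P : Finset (Finset (Fin n))}
    (hP : ∀ S ∈ P, 28 * (k : ℝ) * Real.logb 2 u < #S) :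
    ∑ S ∈ P, walshCoeff f S ^ 2 ≤ 8 / u ^ 4 := by
  obtain ⟨m, a, A, B, hAB, rfl⟩ := exists_eq_sum_levelSets hf
  have nonempty_of_mem : ∀ S ∈ P, S.Nonempty := fun S hS => by
    have logb_nonneg : 0 ≤ Real.logb 2 u := Real.logb_nonneg one_lt_two hu
    rw [← card_pos, ← Nat.cast_pos (α := ℝ)]
    exact lt_of_le_of_lt (by positivity) (hP S hS)
  have level_tail (c : ℕ) : ∑ S ∈ P, walshCoeff
      ((⋃ t : {t // c ≤ a t}, termCube (A t) (B t)).indicator 1) S ^ 2 ≤ 2 / u ^ 4 :=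
    sum_sq_walshCoeff_iUnion_termCube_le (fun t : {t // c ≤ a t} => hAB t) hu hP
  refine (sum_sq_walshCoeff_affine_sum_le nonempty_of_mem _ _ _ _ fun c _ =>
    level_tail c).trans_eq ?_
  rw [Nat.card_Icc, Nat.add_sub_cancel, div_mul_cancel₀ _ (Nat.cast_ne_zero.mpr hr)]
  ring

end TailBound

end PseudoBooleanDNF

open Classical in
/-- for every `f ∈ DNF^{k,r}` and `0 < ε ≤ 1`,
`∑_{|S| > 28k·log₂(2r/ε)} f̂(S)² ≤ ε/2`. -/
theorem pbdnf_fourier_tail_bound (n k r : ℕ) (hr : 1 ≤ r)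
    (ε : ℝ) (hε0 : 0 < ε) (hε1 : ε ≤ 1)
    (f : (Fin n → Bool) → ℝ) (hf : IsPBDNF k r f) :
    ∑ S ∈ Finset.univ.filter
        (fun S : Finset (Fin n) =>
          28 * (k : ℝ) * Real.logb 2 (2 * r / ε) < (S.card : ℝ)),
      (pbFourier f S) ^ 2 ≤ ε / 2 := by
  have two_div_le : 2 / ε ≤ 2 * r / ε := by
    gcongr
    exact le_mul_of_one_le_right two_pos.le (Nat.one_le_cast.mpr hr)
  have one_le : 1 ≤ 2 * r / ε := ((one_le_div hε0).mpr (by linarith)).trans two_div_le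
  simp only [PseudoBooleanDNF.pbFourier_eq_walshCoeff]
  calc _ ≤ 8 / (2 * r / ε) ^ 4 :=
        PseudoBooleanDNF.sum_sq_walshCoeff_le_of_isPBDNF hf (Nat.one_le_iff_ne_zero.mp hr) one_le
          fun S hS => (Finset.mem_filter_univ S).mp hS
    _ ≤ 8 / (2 / ε) ^ 4 := by gcongr
    _ = ε ^ 4 / 2 := by field_simp; norm_num
    _ ≤ ε / 2 := by gcongr; exact pow_le_of_le_one hε0.le hε1 four_ne_zero
end
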